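/- arXiv:2512.09722 — 4 statements merged into one kernel-verified Lean document; each statement's English description precedes it below -/
import Mathlib

section
/- Let k ≥ 2 and 2 ≤ ℓ ≤ k be integers, let u be a real number with 0 < |u| < 1/2, and let L ≥ 0. Then Ĩ_{k,ℓ}(u,L) = (2πu / sin(2πu)) · I_{k,ℓ}(−u, L). -/
open Real MeasureTheory

/-- `I_{k,ℓ}(u,L)`: the integral of `exp(2u(v₁+⋯+v_{ℓ−1}))` over the open simplex
`{v ∈ ℝ^{k−1} : vᵢ > 0, v₁+⋯+v_{k−1} < L/2}` (coordinates are 0-indexed: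
`v i` is `v_{i+1}`). -/
noncomputable def Ikl (k l : ℕ) (u L : ℝ) : ℝ :=
  ∫ v in {v : Fin (k-1) → ℝ | (∀ i, 0 < v i) ∧ ∑ i, v i < L/2},
    Real.exp (2 * u * ∑ i ∈ Finset.univ.filter (fun i : Fin (k-1) => i.val < l - 1), v i)

/-- The `j`-th (1-indexed) coordinate `w_j` for `1 ≤ j ≤ k−1`, with the convention
`w_k = L/2 − (w₁+⋯+w_{k−1})`. -/
noncomputable def wcoord (k : ℕ) (L : ℝ) (w : Fin (k-1) → ℝ) (j : ℕ) : ℝ :=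
  if h : j - 1 < k - 1 then w ⟨j - 1, h⟩ else L/2 - ∑ i, w i

/-- `Ĩ_{k,ℓ}(u,L)`: the integral of
`exp(−2u(w₂+⋯+w_ℓ))·(1−e^{−w_ℓ})^{−2u}·(1−e^{−w₁})^{2u}` over the open simplex
`{w ∈ ℝ^{k−1} : wᵢ > 0, w₁+⋯+w_{k−1} < L/2}`, where `w_k = L/2 − (w₁+⋯+w_{k−1})`. -/
noncomputable def Itkl (k l : ℕ) (u L : ℝ) : ℝ :=
  ∫ w in {w : Fin (k-1) → ℝ | (∀ i, 0 < w i) ∧ ∑ i, w i < L/2},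
    Real.exp (-(2*u) * ∑ j ∈ Finset.Icc 2 l, wcoord k L w j)
      * (1 - Real.exp (-(wcoord k L w l))) ^ (-(2*u))
      * (1 - Real.exp (-(wcoord k L w 1))) ^ (2*u)

open scoped ENNReal

lemma beta_lint (a : ℝ) (h1 : -1 < a) (h0 : a < 0) :
    ∫⁻ x in Set.Ioo (0:ℝ) 1, ENNReal.ofReal (x ^ a * (1 - x) ^ (-a-1))
      = ENNReal.ofReal (π / Real.sin (π * (a+1))) := by
  have hb : ProbabilityTheory.beta (a+1) (-a) = π / Real.sin (π * (a+1)) := by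
    unfold ProbabilityTheory.beta
    have := Real.Gamma_mul_Gamma_one_sub (a+1)
    rw [← this]
    rw [show a + 1 + -a = 1 by ring, Real.Gamma_one, show 1 - (a+1) = -a by ring, div_one]
  have hpos : 0 < ProbabilityTheory.beta (a+1) (-a) :=
    ProbabilityTheory.beta_pos (by linarith) (by linarith)
  have h := ProbabilityTheory.lintegral_betaPDF_eq_one (α := a+1) (β := -a) (by linarith) (by linarith)
  rw [ProbabilityTheory.lintegral_betaPDF] at h
  have e : ∀ x : ℝ, ENNReal.ofReal (1 / ProbabilityTheory.beta (a+1) (-a) * x ^ (a + 1 - 1) * (1 - x) ^ (-a - 1)) = ENNReal.ofReal (1 / ProbabilityTheory.beta (a+1) (-a)) * ENNReal.ofReal (x ^ a * (1 - x) ^ (-a-1)) := by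
    intro x
    rw [← ENNReal.ofReal_mul (by positivity), mul_assoc, show a + 1 - 1 = a by ring]
  simp_rw [e] at h
  rw [lintegral_const_mul' _ _ (by simp)] at h
  rw [← hb]
  calc _ = ENNReal.ofReal (ProbabilityTheory.beta (a+1) (-a)) * (ENNReal.ofReal (1 / ProbabilityTheory.beta (a+1) (-a)) * ∫⁻ x in Set.Ioo (0:ℝ) 1, ENNReal.ofReal (x ^ a * (1 - x) ^ (-a-1))) := by
        rw [← mul_assoc, ← ENNReal.ofReal_mul hpos.le, mul_one_div_cancel hpos.ne']
        simp
    _ = _ := by rw [h, mul_one]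

lemma B_lint (a : ℝ) (h1 : -1 < a) (h0 : a < 0) (X : ℝ) (hX : 0 < X) :
    ∫⁻ t in Set.Ioi (0:ℝ), ENNReal.ofReal (t ^ a * (X / (1 + t * X)))
      = ENNReal.ofReal (X ^ (-a) * (π / Real.sin (π * (a+1)))) := by
  have him : (fun y : ℝ => y / ((1 - y) * X)) '' Set.Ioo 0 1 = Set.Ioi 0 := by
    ext t
    constructor
    · rintro ⟨y, ⟨hy0, hy1⟩, rfl⟩
      have : 0 < 1 - y := by linarith
      simp only [Set.mem_Ioi]; positivity
    · intro ht
      have ht : 0 < t := ht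
      have hd : 0 < 1 + t * X := by positivity
      refine ⟨t * X / (1 + t * X), ⟨by positivity, ?_⟩, ?_⟩
      · rw [div_lt_one hd]; linarith
      · simp only
        have : 1 - t * X / (1 + t * X) = 1 / (1 + t * X) := by field_simp; ring
        rw [this]; field_simp
  rw [← him, lintegral_image_eq_lintegral_abs_deriv_mul (f' := fun y => 1 / (X * (1-y)^2)) measurableSet_Ioo]
  · rw [ENNReal.ofReal_mul (by positivity), ← beta_lint a h1 h0, ← lintegral_const_mul' _ _ (by simp)]
    refine setLIntegral_congr_fun measurableSet_Ioo ?_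
    rintro y ⟨hy0, hy1⟩
    have hy : 0 < 1 - y := by linarith
    simp only
    rw [← ENNReal.ofReal_mul (by positivity), ← ENNReal.ofReal_mul (by positivity)]
    congr 1
    rw [abs_of_nonneg (by positivity), Real.div_rpow hy0.le (by positivity), Real.mul_rpow hy.le hX.le,
      Real.rpow_sub hy, Real.rpow_neg hy.le, Real.rpow_neg hX.le, Real.rpow_one]
    have : 1 + y / ((1 - y) * X) * X = 1 / (1 - y) := by field_simp; ring
    rw [this]
    have := Real.rpow_pos_of_pos hX a
    have := Real.rpow_pos_of_pos hy a
    field_simp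
  · rintro y ⟨hy0, hy1⟩
    have hy : 1 - y ≠ 0 := by linarith
    apply HasDerivAt.hasDerivWithinAt
    refine ((hasDerivAt_id' y).fun_div (((hasDerivAt_id' y).const_sub 1).mul_const X) (mul_ne_zero hy hX.ne')).congr_deriv ?_
    field_simp; ring
  · rintro y ⟨hy0, hy1⟩ z ⟨hz0, hz1⟩ h
    have hy : 1 - y ≠ 0 := by linarith
    have hz : 1 - z ≠ 0 := by linarith
    simp only at h
    field_simp at h
    linarith

lemma J_lint (a : ℝ) (h1 : -1 < a) (h0 : a < 0) (T : ℝ) (hT : 0 < T) :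
    ∫⁻ w in Set.Ioo (0:ℝ) T, ENNReal.ofReal (((exp w - 1) / (exp T - exp w)) ^ a)
      = ENNReal.ofReal (π / Real.sin (π * a) * (1 - exp (-a * T))) := by
  have hX1 : 1 < exp T := by simpa using hT
  set X := exp T with hX
  have him : (fun w : ℝ => (exp w - 1) / (X - exp w)) '' Set.Ioo 0 T = Set.Ioi 0 := by
    ext t
    constructor
    · rintro ⟨y, ⟨hy0, hy1⟩, rfl⟩
      have : 0 < X - exp y := by simpa [hX] using hy1
      have : 0 < exp y - 1 := by simpa using hy0
      simp only [Set.mem_Ioi]; positivity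
    · intro ht
      have ht : 0 < t := ht
      have hX0 : 0 < X := by linarith
      have hd : 0 < (1 + t * X) / (1 + t) := by positivity
      refine ⟨Real.log ((1 + t * X) / (1 + t)), ⟨?_, ?_⟩, ?_⟩
      · apply Real.log_pos
        rw [one_lt_div (by positivity)]; nlinarith
      · rw [Real.log_lt_iff_lt_exp hd, ← hX, div_lt_iff₀ (by positivity)]; nlinarith
      · simp only
        rw [Real.exp_log hd]
        have e1 : (1 + t * X) / (1 + t) - 1 = t * (X - 1) / (1 + t) := by field_simp; ring
        have e2 : X - (1 + t * X) / (1 + t) = (X - 1) / (1 + t) := by field_simp; ring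
        rw [e1, e2]
        have : X - 1 ≠ 0 := by linarith
        field_simp
  have hcov : ∫⁻ w in Set.Ioo (0:ℝ) T, ENNReal.ofReal (((exp w - 1) / (X - exp w)) ^ a)
      = ∫⁻ t in Set.Ioi (0:ℝ), ENNReal.ofReal (t ^ a * (X / (1 + t * X) - 1 / (1 + t))) := by
    rw [← him, lintegral_image_eq_lintegral_abs_deriv_mul (f' := fun w => exp w * (X - 1) / (X - exp w)^2) measurableSet_Ioo]
    · refine setLIntegral_congr_fun measurableSet_Ioo ?_
      rintro y ⟨hy0, hy1⟩
      have hy : 0 < X - exp y := by simpa [hX] using hy1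
      have hy' : 0 < exp y - 1 := by simpa using hy0
      have hX' : 0 < X - 1 := by linarith
      have hey := exp_pos y
      simp only
      rw [← ENNReal.ofReal_mul (by positivity)]
      congr 1
      rw [abs_of_nonneg (by positivity)]
      have e1 : 1 + (exp y - 1) / (X - exp y) * X = exp y * (X - 1) / (X - exp y) := by
        field_simp; ring
      have e2 : 1 + (exp y - 1) / (X - exp y) = (X - 1) / (X - exp y) := by
        field_simp; ring
      rw [e1, e2]
      generalize ((exp y - 1) / (X - exp y)) ^ a = r
      field_simp
    · rintro y ⟨hy0, hy1⟩
      have hy : 0 < X - exp y := by simpa [hX] using hy1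
      apply HasDerivAt.hasDerivWithinAt
      refine (((Real.hasDerivAt_exp y).sub_const 1).fun_div ((Real.hasDerivAt_exp y).const_sub X) hy.ne').congr_deriv ?_
      field_simp; ring
    · rintro y ⟨hy0, hy1⟩ z ⟨hz0, hz1⟩ h
      have hy : 0 < X - exp y := by simpa [hX] using hy1
      have hz : 0 < X - exp z := by simpa [hX] using hz1
      simp only at h
      rw [div_eq_div_iff hy.ne' hz.ne'] at h
      apply Real.exp_injective
      have : (X - 1) * (exp y - exp z) = 0 := by linarith
      rcases mul_eq_zero.1 this with h | h <;> linarith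
  have hs : Real.sin (π * (a+1)) = - Real.sin (π * a) := by
    rw [mul_add, mul_one, Real.sin_add_pi]
  have hsn : 0 < Real.sin (π * (a+1)) := by
    apply Real.sin_pos_of_pos_of_lt_pi
    · have := Real.pi_pos; nlinarith
    · have := Real.pi_pos; nlinarith
  have hadd : ∫⁻ t in Set.Ioi (0:ℝ), ENNReal.ofReal (t ^ a * (X / (1 + t * X)))
     = (∫⁻ t in Set.Ioi (0:ℝ), ENNReal.ofReal (t ^ a * (X / (1 + t * X) - 1 / (1 + t)))) 
      + ∫⁻ t in Set.Ioi (0:ℝ), ENNReal.ofReal (t ^ a * (1 / (1 + t * 1))) := by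
    rw [← lintegral_add_right _ (by fun_prop)]
    refine setLIntegral_congr_fun measurableSet_Ioi ?_
    intro t ht
    have ht : 0 < t := ht
    simp only
    rw [← ENNReal.ofReal_add]
    · congr 1; ring
    · have : X / (1 + t * X) - 1 / (1 + t) = (X - 1) / ((1 + t * X) * (1 + t)) := by
        have : 0 < 1 + t * X := by positivity
        field_simp; ring
      rw [this]
      have : 0 < X - 1 := by linarith
      positivity
    · positivity
  rw [hcov]
  rw [B_lint a h1 h0 X (by linarith), B_lint a h1 h0 1 one_pos] at hadd
  have := ENNReal.eq_sub_of_add_eq (by simp) hadd.symm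
  rw [this, ← ENNReal.ofReal_sub _ (by positivity)]
  congr 1
  have : X ^ (-a) = exp (-a * T) := by rw [hX, ← Real.exp_mul]; congr 1; ring
  rw [this, hs, Real.one_rpow]
  have : Real.sin (π * a) ≠ 0 := by linarith
  field_simp; ring

/-- Extension by zero of a real function on the positive half-line. -/
noncomputable def liftp (φ : ℝ → ℝ) : ℝ → ℝ≥0∞ :=
  (Set.Ioi (0:ℝ)).indicator (fun x => ENNReal.ofReal (φ x))

lemma liftp_meas {φ : ℝ → ℝ} (h : Measurable φ) : Measurable (liftp φ) :=
  (ENNReal.measurable_ofReal.comp h).indicator measurableSet_Ioi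

lemma liftp_pos {φ : ℝ → ℝ} {x : ℝ} (h : 0 < x) : liftp φ x = ENNReal.ofReal (φ x) := by
  simp [liftp, h]

lemma liftp_neg {φ : ℝ → ℝ} {x : ℝ} (h : ¬ 0 < x) : liftp φ x = 0 := by
  simp [liftp, h]

noncomputable def cR (F : ℕ → ℝ → ℝ≥0∞) : ℕ → ℝ → ℝ≥0∞
  | 0 => F 0
  | n+1 => lconvolution (cR F n) (F (n+1)) volume

lemma cR_meas {F : ℕ → ℝ → ℝ≥0∞} (hF : ∀ i, Measurable (F i)) (n : ℕ) : Measurable (cR F n) := by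
  induction n with
  | zero => exact hF 0
  | succ n ih => exact measurable_lconvolution _ ih (hF _)

lemma conv_right_comm {x y z : ℝ → ℝ≥0∞} (hx : Measurable x) (hy : Measurable y)
    (hz : Measurable z) : ((x ⋆ₗ y) ⋆ₗ z) = ((x ⋆ₗ z) ⋆ₗ y) := by
  rw [← lconvolution_assoc hx hy hz, ← lconvolution_assoc hx hz hy, lconvolution_comm (f := y)]

lemma conv_smul {x y : ℝ → ℝ≥0∞} {c : ℝ≥0∞} (hc : c ≠ ⊤) :
    ((fun t => c * x t) ⋆ₗ y) = fun t => c * (x ⋆ₗ y) t := by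
  ext t
  simp only [lconvolution_def, mul_assoc]
  rw [lintegral_const_mul' _ _ hc]

/-- Generalised version with an arbitrary last function. -/
lemma pi_conv_aux (n : ℕ) (F : ℕ → ℝ → ℝ≥0∞) (hF : ∀ i, Measurable (F i)) :
    ∀ (h : ℝ → ℝ≥0∞) (_ : Measurable h) (T : ℝ),
    ∫⁻ w : Fin (n+1) → ℝ, (∏ i, F (i : Fin (n+1)) (w i)) * h (T - ∑ i, w i) = (cR F n ⋆ₗ h) T := by
  induction n with
  | zero =>
    intro h hh T
    have := (volume_preserving_funUnique (Fin 1) ℝ).lintegral_comp_emb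
      (MeasurableEquiv.measurableEmbedding _) (fun x => F 0 x * h (-x + T))
    rw [lconvolution_def, cR, ← this]
    refine lintegral_congr fun w => ?_
    simp [MeasurableEquiv.funUnique, sub_eq_neg_add]
  | succ n ih =>
    intro h hh T
    have hm := volume_preserving_piFinSuccAbove (fun _ : Fin (n+2) => ℝ) (Fin.last (n+1))
    have := hm.lintegral_comp_emb (MeasurableEquiv.measurableEmbedding _)
      (fun p : ℝ × (Fin (n+1) → ℝ) => (∏ i, F (i : Fin (n+1)) (p.2 i)) * (F (n+1) p.1 * h (-p.1 + (T - ∑ i, p.2 i))))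
    have h2 : ∫⁻ w : Fin (n+2) → ℝ, (∏ i, F (i : Fin (n+2)) (w i)) * h (T - ∑ i, w i) = 
       ∫⁻ p : ℝ × (Fin (n+1) → ℝ), (∏ i, F (i : Fin (n+1)) (p.2 i)) * (F (n+1) p.1 * h (-p.1 + (T - ∑ i, p.2 i))) := by
      refine Eq.trans ?_ this
      refine lintegral_congr fun w => ?_
      rw [Fin.prod_univ_castSucc, Fin.sum_univ_castSucc]
      simp only [MeasurableEquiv.piFinSuccAbove_apply, Fin.insertNthEquiv, Equiv.symm, Equiv.coe_fn_mk, Fin.removeNth, Fin.succAbove_last, Fin.val_castSucc, Fin.val_last]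
      rw [mul_assoc]
      congr 3
      ring
    rw [h2, Measure.volume_eq_prod, lintegral_prod_symm']
    · have : ∀ w : Fin (n+1) → ℝ, ∫⁻ x : ℝ, (∏ i, F (i : Fin (n+1)) (w i)) * (F (n+1) x * h (-x + (T - ∑ i, w i)))
         = (∏ i, F (i : Fin (n+1)) (w i)) * (F (n+1) ⋆ₗ h) (T - ∑ i, w i) := by
        intro w
        rw [lconvolution_def, lintegral_const_mul]
        have := hF (n+1)
        fun_prop
      simp only [this]
      rw [ih _ (measurable_lconvolution _ (hF _) hh), cR, lconvolution_assoc (cR_meas hF n) (hF _) hh]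
    · refine Measurable.mul ?_ (Measurable.mul ((hF _).comp measurable_fst) (hh.comp (by fun_prop)))
      refine Finset.measurable_prod _ fun i _ => (hF i).comp (by fun_prop)

lemma simplex_int (n : ℕ) (φ : ℕ → ℝ → ℝ) (hφ : ∀ i, Measurable (φ i))
    (h0 : ∀ i x, 0 < x → 0 ≤ φ i x) (T : ℝ) :
    ∫ w in {w : Fin (n+1) → ℝ | (∀ i, 0 < w i) ∧ ∑ i, w i < T},
      (∏ i, φ (i : Fin (n+1)) (w i)) * φ (n+1) (T - ∑ i, w i)
      = (cR (fun i => liftp (φ i)) (n+1) T).toReal := by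
  have hS : MeasurableSet {w : Fin (n+1) → ℝ | (∀ i, 0 < w i) ∧ ∑ i, w i < T} := by
    have e : {w : Fin (n+1) → ℝ | (∀ i, 0 < w i) ∧ ∑ i, w i < T}
        = (⋂ i, {w : Fin (n+1) → ℝ | 0 < w i}) ∩ {w : Fin (n+1) → ℝ | ∑ i, w i < T} := by
      ext; simp
    rw [e]
    refine MeasurableSet.inter (MeasurableSet.iInter fun i => ?_) ?_
    · exact measurableSet_lt (by fun_prop) (by fun_prop)
    · exact measurableSet_lt (by fun_prop) (by fun_prop)
  rw [integral_eq_lintegral_of_nonneg_ae]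
  · congr 1
    rw [cR, ← pi_conv_aux n _ (fun i => liftp_meas (hφ i)) _ (liftp_meas (hφ _)), ← lintegral_indicator hS]
    refine lintegral_congr fun w => ?_
    by_cases hw : w ∈ {w : Fin (n+1) → ℝ | (∀ i, 0 < w i) ∧ ∑ i, w i < T}
    · rw [Set.indicator_of_mem hw, ENNReal.ofReal_mul, liftp_pos (by linarith [hw.2]), ENNReal.ofReal_prod_of_nonneg]
      · congr 1
        exact Finset.prod_congr rfl fun i _ => (liftp_pos (hw.1 i)).symm
      · exact fun i _ => h0 _ _ (hw.1 i)
      · exact Finset.prod_nonneg fun i _ => h0 _ _ (hw.1 i)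
    · rw [Set.indicator_of_notMem hw]
      symm
      rw [mul_eq_zero]
      simp only [Set.mem_ofPred_eq, not_and_or, not_forall] at hw
      rcases hw with ⟨i, hi⟩ | hi
      · exact Or.inl (Finset.prod_eq_zero (Finset.mem_univ i) (liftp_neg hi))
      · exact Or.inr (liftp_neg (by simpa using hi))
  · refine (ae_restrict_iff' hS).2 (Filter.Eventually.of_forall fun w hw => ?_)
    exact mul_nonneg (Finset.prod_nonneg fun i _ => h0 _ _ (hw.1 i)) (h0 _ _ (by linarith [hw.2]))
  · refine Measurable.aestronglyMeasurable ?_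
    refine Measurable.mul ?_ ((hφ _).comp (by fun_prop))
    exact Finset.measurable_prod _ fun i _ => (hφ i).comp (by fun_prop)

lemma conv_liftp (φ ψ : ℝ → ℝ) (T : ℝ) : (liftp φ ⋆ₗ liftp ψ) T =
    ∫⁻ y in Set.Ioo 0 T, ENNReal.ofReal (φ y) * ENNReal.ofReal (ψ (-y + T)) := by
  rw [lconvolution_def, ← lintegral_indicator measurableSet_Ioo]
  refine lintegral_congr fun y => ?_
  by_cases h1 : 0 < y
  · by_cases h2 : y < T
    · rw [Set.indicator_of_mem (Set.mem_Ioo.2 ⟨h1, h2⟩), liftp_pos h1, liftp_pos (by linarith)]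
    · rw [Set.indicator_of_notMem (fun h => h2 h.2), liftp_neg (x := -y + T) (by linarith), mul_zero]
  · rw [Set.indicator_of_notMem (fun h => h1 h.1), liftp_neg h1, zero_mul]

noncomputable def fA (a : ℝ) : ℝ → ℝ≥0∞ := liftp fun x => (1 - exp (-x)) ^ a
noncomputable def gA (a : ℝ) : ℝ → ℝ≥0∞ := liftp fun x => (1 - exp (-x)) ^ (-a) * exp (-a * x)
noncomputable def eA (a : ℝ) : ℝ → ℝ≥0∞ := liftp fun x => exp (-a * x)

lemma fg_neg (a : ℝ) (h1 : -1 < a) (h0 : a < 0) (T : ℝ) (hT : 0 < T) :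
    (fA a ⋆ₗ gA a) T = ENNReal.ofReal (π / Real.sin (π * a) * (1 - exp (-a * T))) := by
  rw [fA, gA, conv_liftp, ← J_lint a h1 h0 T hT]
  refine setLIntegral_congr_fun measurableSet_Ioo ?_
  rintro y ⟨hy0, hy1⟩
  have p1 : 0 < 1 - exp (-y) := by simpa using hy0
  have p2 : 0 < 1 - exp (-(-y + T)) := by simpa using hy1
  have p3 : 0 < exp T - exp y := by simpa using hy1
  have p4 : 0 < exp y - 1 := by simpa using hy0
  simp only
  rw [← ENNReal.ofReal_mul (by positivity)]
  congr 1
  rw [show exp (-a * (-y + T)) = (exp (-y + T)) ^ (-a) by rw [← Real.exp_mul]; congr 1; ring,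
    ← Real.mul_rpow p2.le (exp_pos _).le]
  have e1 : (1 - exp (-(-y + T))) * exp (-y + T) = (exp T - exp y) / exp y := by
    rw [sub_mul, ← Real.exp_add, sub_div, ← Real.exp_sub]
    rw [div_self (exp_pos y).ne']
    simp; ring_nf
  have e2 : 1 - exp (-y) = (exp y - 1) / exp y := by
    rw [Real.exp_neg]; field_simp
  rw [e1, e2, Real.rpow_neg (by positivity), ← div_eq_mul_inv, ← Real.div_rpow (by positivity) (by positivity)]
  congr 1
  field_simp

lemma fg_refl (a T : ℝ) : (fA a ⋆ₗ gA a) T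
    = ENNReal.ofReal (exp (-a * T)) * (fA (-a) ⋆ₗ gA (-a)) T := by
  rw [lconvolution_comm (f := fA (-a)), fA, gA, fA, gA, conv_liftp, conv_liftp, ← lintegral_const_mul' _ _ (by simp)]
  refine setLIntegral_congr_fun measurableSet_Ioo ?_
  rintro y ⟨hy0, hy1⟩
  have p1 : 0 < 1 - exp (-y) := by simpa using hy0
  have p2 : 0 < 1 - exp (-(-y + T)) := by simpa using hy1
  simp only
  rw [← ENNReal.ofReal_mul (by positivity), ← ENNReal.ofReal_mul (by positivity), ← ENNReal.ofReal_mul (by positivity)]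
  congr 1
  rw [show -a * (-y + T) = -a * T + a * y by ring, Real.exp_add, neg_neg]
  ring

lemma fg_all (a : ℝ) (h1 : |a| < 1) (h0 : a ≠ 0) (T : ℝ) (hT : 0 < T) :
    (fA a ⋆ₗ gA a) T = ENNReal.ofReal (π / Real.sin (π * a) * (1 - exp (-a * T))) := by
  rw [abs_lt] at h1
  rcases lt_or_gt_of_ne h0 with h | h
  · exact fg_neg a h1.1 h T hT
  · rw [fg_refl, fg_neg (-a) (by linarith) (by linarith) T hT, ← ENNReal.ofReal_mul (exp_pos _).le]
    congr 1
    rw [mul_neg, Real.sin_neg, neg_neg, mul_left_comm, mul_sub, ← Real.exp_add,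
      show -a * T + a * T = 0 by ring, Real.exp_zero, div_neg]
    ring

lemma e_conv (a : ℝ) (h0 : a ≠ 0) (T : ℝ) (hT : 0 < T) :
    (eA a ⋆ₗ eA 0) T = ENNReal.ofReal ((1 - exp (-a * T)) / a) := by
  rw [eA, eA, conv_liftp]
  simp only [neg_zero, zero_mul, Real.exp_zero, ENNReal.ofReal_one, mul_one]
  rw [← ofReal_integral_eq_lintegral_ofReal]
  · congr 1
    rw [← integral_Ioc_eq_integral_Ioo, ← intervalIntegral.integral_of_le hT.le,
      intervalIntegral.integral_comp_mul_left (fun x => exp x) (neg_ne_zero.2 h0), integral_exp]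
    simp
    field_simp
    ring
  · exact (Continuous.integrableOn_Icc (by fun_prop)).mono_set Set.Ioo_subset_Icc_self
  · exact Filter.Eventually.of_forall fun x => (exp_pos _).le

lemma sin_ratio_nonneg (a : ℝ) (h1 : |a| < 1) (h0 : a ≠ 0) : 0 ≤ π * a / Real.sin (π * a) := by
  rw [abs_lt] at h1
  have := Real.pi_pos
  rcases lt_or_gt_of_ne h0 with h | h
  · apply div_nonneg_of_nonpos
    · nlinarith
    · apply Real.sin_nonpos_of_nonpos_of_neg_pi_le <;> nlinarith
  · apply div_nonneg
    · nlinarith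
    · apply Real.sin_nonneg_of_nonneg_of_le_pi <;> nlinarith

lemma conv_id (a : ℝ) (h1 : |a| < 1) (h0 : a ≠ 0) :
    (fA a ⋆ₗ gA a) = fun T => ENNReal.ofReal (π * a / Real.sin (π * a)) * (eA a ⋆ₗ eA 0) T := by
  ext T
  by_cases hT : 0 < T
  · rw [fg_all a h1 h0 T hT, e_conv a h0 T hT, ← ENNReal.ofReal_mul (sin_ratio_nonneg a h1 h0)]
    congr 1
    field_simp
  · simp [fA, gA, eA, conv_liftp, Set.Ioo_eq_empty hT]

noncomputable def phiR (a : ℝ) (l i : ℕ) (x : ℝ) : ℝ :=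
  (if i = 0 then (1 - exp (-x)) ^ a else 1) * (if i = l - 1 then (1 - exp (-x)) ^ (-a) else 1)
    * exp (-a * if 1 ≤ i ∧ i ≤ l - 1 then x else 0)

noncomputable def psiR (a : ℝ) (l i : ℕ) (x : ℝ) : ℝ :=
  exp (-a * if i < l - 1 then x else 0)

lemma phiR_meas (a : ℝ) (l i : ℕ) : Measurable (phiR a l i) := by
  unfold phiR
  split_ifs <;> fun_prop

lemma psiR_meas (a : ℝ) (l i : ℕ) : Measurable (psiR a l i) := by
  unfold psiR
  split_ifs <;> fun_prop

lemma phiR_nonneg (a : ℝ) (l i : ℕ) (x : ℝ) (hx : 0 < x) : 0 ≤ phiR a l i x := by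
  have p1 : 0 < 1 - exp (-x) := by simpa using hx
  unfold phiR
  split_ifs <;> positivity

lemma psiR_nonneg (a : ℝ) (l i : ℕ) (x : ℝ) (_ : 0 < x) : 0 ≤ psiR a l i x := (exp_pos _).le

lemma phiR_zero (a : ℝ) (m : ℕ) : liftp (phiR a (m+2) 0) = fA a := by
  unfold fA; congr 1; ext x; simp [phiR]

lemma phiR_mid (a : ℝ) (m i : ℕ) (h : i < m) : liftp (phiR a (m+2) (i+1)) = eA a := by
  unfold eA; congr 1; ext x
  simp [phiR, h.ne, h.le]

lemma phiR_l (a : ℝ) (m : ℕ) : liftp (phiR a (m+2) (m+1)) = gA a := by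
  unfold gA; congr 1; ext x; simp [phiR]

lemma phiR_gt (a : ℝ) (m i : ℕ) (h : m + 1 < i) : liftp (phiR a (m+2) i) = eA 0 := by
  unfold eA; congr 1; ext x
  simp [phiR, h.ne', h, show i ≠ 0 by omega]

lemma psiR_lt (a : ℝ) (m i : ℕ) (h : i < m + 1) : liftp (psiR a (m+2) i) = eA a := by
  unfold eA; congr 1; ext x
  simp [psiR, h]

lemma psiR_ge (a : ℝ) (m i : ℕ) (h : m + 1 ≤ i) : liftp (psiR a (m+2) i) = eA 0 := by
  unfold eA; congr 1; ext x
  simp [psiR, show ¬ i < m + 1 by omega]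

lemma main_conv (a : ℝ) (h1 : |a| < 1) (h0 : a ≠ 0) (m j : ℕ) :
    cR (fun i => liftp (phiR a (m+2) i)) (m + 1 + j) = fun T =>
      ENNReal.ofReal (π * a / Real.sin (π * a)) * cR (fun i => liftp (psiR a (m+2) i)) (m + 1 + j) T := by
  have hF := fun i => liftp_meas (phiR_meas a (m+2) i)
  have hG := fun i => liftp_meas (psiR_meas a (m+2) i)
  have mg : Measurable (gA a) := by rw [← phiR_l a 0]; exact liftp_meas (phiR_meas _ _ _)
  have me : ∀ a, Measurable (eA a) := fun a => by
    rw [← psiR_lt a 0 0 (by omega)]; exact liftp_meas (psiR_meas _ _ _)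
  induction j with
  | zero =>
    have key : ∀ i, i ≤ m → (cR (fun i => liftp (phiR a (m+2) i)) i ⋆ₗ gA a) = fun T =>
      ENNReal.ofReal (π * a / Real.sin (π * a)) * (cR (fun i => liftp (psiR a (m+2) i)) i ⋆ₗ eA 0) T := by
      intro i
      induction i with
      | zero =>
        intro _
        rw [cR, cR, phiR_zero, psiR_lt a m 0 (by omega), conv_id a h1 h0]
      | succ i ih =>
        intro hi
        have ih := ih (by omega)
        rw [cR, cR, phiR_mid a m i (by omega), psiR_lt a m (i+1) (by omega),
          conv_right_comm (cR_meas hF i) (me a) mg, ih, conv_smul (by simp),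
          conv_right_comm (cR_meas hG i) (me 0) (me a)]
    have := key m le_rfl
    rw [add_zero, cR, cR, phiR_l, psiR_ge a m (m+1) le_rfl, this]
  | succ j ih =>
    rw [← add_assoc, cR, cR, ih, conv_smul (by simp), phiR_gt a m _ (by omega), psiR_ge a m _ (by omega)]

/-- **Reflection relation (proof of Proposition 5.2).** For `2 ≤ ℓ ≤ k`,
`0 < |u| < 1/2` and `L ≥ 0`: `Ĩ_{k,ℓ}(u,L) = (2πu/sin(2πu)) · I_{k,ℓ}(−u,L)`. -/
theorem stmt_6 (k l : ℕ) (hk : 2 ≤ k) (hl2 : 2 ≤ l) (hlk : l ≤ k)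
    (u L : ℝ) (hu0 : 0 < |u|) (hu : |u| < 1/2) (hL : 0 ≤ L) :
    Itkl k l u L = (2*π*u / Real.sin (2*π*u)) * Ikl k l (-u) L := by
  obtain ⟨m, rfl⟩ : ∃ m, l = m + 2 := ⟨l - 2, by omega⟩
  obtain ⟨j, rfl⟩ : ∃ j, k = m + j + 2 := ⟨k - (m + 2), by omega⟩
  have ha : |2 * u| < 1 := by rw [abs_mul, abs_two]; linarith
  have ha0 : 2 * u ≠ 0 := by
    have := abs_pos.1 hu0
    simpa using this
  have hI : Ikl (m + j + 2) (m + 2) (-u) L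
      = (cR (fun i => liftp (psiR (2*u) (m+2) i)) (m + j + 1) (L/2)).toReal := by
    rw [← simplex_int (m + j) _ (psiR_meas (2*u) (m+2)) (psiR_nonneg (2*u) (m+2))]
    unfold Ikl
    show ∫ v in {v : Fin (m + j + 1) → ℝ | (∀ i, 0 < v i) ∧ ∑ i, v i < L/2},
      Real.exp (2 * -u * ∑ i ∈ Finset.univ.filter (fun i : Fin (m + j + 1) => i.val < m + 1), v i) = _
    congr 1
    ext w
    simp only [psiR]
    rw [← Real.exp_sum, ← Real.exp_add, ← Finset.mul_sum, Finset.sum_filter]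
    congr 1
    rw [if_neg (by omega)]
    simp
  have hIt : Itkl (m + j + 2) (m + 2) u L
      = (cR (fun i => liftp (phiR (2*u) (m+2) i)) (m + j + 1) (L/2)).toReal := by
    rw [← simplex_int (m + j) _ (phiR_meas (2*u) (m+2)) (phiR_nonneg (2*u) (m+2))]
    unfold Itkl
    congr 1
    ext w
    have e : (∏ i, phiR (2*u) (m+2) (i : Fin (m+j+1)) (w i)) * phiR (2*u) (m+2) (m+j+1) (L/2 - ∑ i, w i)
        = ∏ i ∈ Finset.range (m+j+2), phiR (2*u) (m+2) i (wcoord (m+j+2) L w (i+1)) := by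
      rw [Finset.prod_range_succ, Finset.prod_range]
      congr 1
      · refine Finset.prod_congr rfl fun i _ => ?_
        have := i.isLt
        simp [wcoord, show (i:ℕ) ≤ m + j by omega]
      · simp [wcoord]
    refine Eq.trans ?_ e.symm
    simp only [phiR]
    rw [Finset.prod_mul_distrib, Finset.prod_mul_distrib, Finset.prod_ite_eq', Finset.prod_ite_eq',
      ← Real.exp_sum, ← Finset.mul_sum, ← Finset.sum_filter, if_pos (by simp), if_pos (by simp)]
    have hs : ∑ i ∈ Finset.range (m+j+2) with 1 ≤ i ∧ i ≤ m + 2 - 1, wcoord (m+j+2) L w (i+1)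
        = ∑ i ∈ Finset.Icc 2 (m+2), wcoord (m+j+2) L w i := by
      refine Finset.sum_bij (fun i _ => i + 1) ?_ ?_ ?_ ?_
      · intro i hi; simp at hi ⊢; omega
      · intro i _ i' _ h; simpa using h
      · intro b hb
        simp at hb
        refine ⟨b - 1, ?_, by omega⟩
        simp; omega
      · intros; rfl
    rw [hs]
    simp only [zero_add, show m + 2 - 1 + 1 = m + 2 by omega]
    ring
  rw [hI, hIt, show m + j + 1 = m + 1 + j by omega, main_conv _ ha ha0, ENNReal.toReal_mul,
    ENNReal.toReal_ofReal (sin_ratio_nonneg _ ha ha0)]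
  congr 2
  · ring
  · ring_nf
end

section
/- Let u be a real number with 0 < |u| < 1/2, let L ≥ 0 and r ≥ 0. Then ∑_{k=2}^∞ r^{k−2} · 2^{k−1} · ∑_{ℓ=2}^k I_{k,ℓ}(u,L) · Ĩ_{k,ℓ}(u,L) = (2πu / sin(2πu)) · ∑_{p=0}^∞ (u^{2p} / (2p+1)!!) · ∑_{m=p+1}^∞ L^{2m} · r^{m−p−1} / (2^m · m! · (m−p−1)!), where (2p+1)!! = (2p+1)!/(2^p·p!) and all series converge absolutely. -/
open Real MeasureTheory

open scoped ENNReal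


lemma hda_congr {f g : ℝ → ℝ} {f' g' x : ℝ} (h : HasDerivAt f f' x) (e : g = f) (e' : g' = f') :
    HasDerivAt g g' x := by subst e; subst e'; exact h

noncomputable def ff (s : ℝ) : ℕ → ℕ → ℝ → ℝ
  | 0, 0 => fun _ => 0
  | 0, b+1 => fun x => x^b / (b.factorial : ℝ)
  | a+1, 0 => fun x => Real.exp (s*x) * (x^a / (a.factorial : ℝ))
  | a+1, b+1 => fun x => Real.exp (s*x) * ∫ t in (0:ℝ)..x, Real.exp (-(s*t)) * ff s a (b+1) t

lemma ff_cont (s : ℝ) (a b : ℕ) : Continuous (ff s a b) := by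
  induction a generalizing b with
  | zero =>
    cases b with
    | zero => simp only [ff]; fun_prop
    | succ b => simp only [ff]; fun_prop
  | succ a ih =>
    cases b with
    | zero => simp only [ff]; fun_prop
    | succ b =>
      have := ih (b+1)
      simp only [ff]
      refine Continuous.mul (by fun_prop) ?_
      exact intervalIntegral.continuous_primitive (fun x y => (by fun_prop : Continuous fun t => Real.exp (-(s*t)) * ff s a (b+1) t).intervalIntegrable x y) 0

lemma ff_deriv1 (s : ℝ) (a b : ℕ) (x : ℝ) :
    HasDerivAt (ff s (a+1) (b+1)) (s * ff s (a+1) (b+1) x + ff s a (b+1) x) x := by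
  have hc := ff_cont s a (b+1)
  have h1 : HasDerivAt (fun x => ∫ t in (0:ℝ)..x, Real.exp (-(s*t)) * ff s a (b+1) t)
      (Real.exp (-(s*x)) * ff s a (b+1) x) x :=
    ((by fun_prop : Continuous fun t => Real.exp (-(s*t)) * ff s a (b+1) t)).integral_hasStrictDerivAt 0 x |>.hasDerivAt
  have h2 : HasDerivAt (fun x => Real.exp (s*x)) (Real.exp (s*x) * s) x := by
    simpa using ((hasDerivAt_id x).const_mul s).exp
  have h3 := h2.mul h1
  have e : ff s (a+1) (b+1) = fun x => Real.exp (s*x) * ∫ t in (0:ℝ)..x, Real.exp (-(s*t)) * ff s a (b+1) t := by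
    simp only [ff]
  rw [e]
  refine hda_congr h3 rfl ?_
  have : Real.exp (s*x) * Real.exp (-(s*x)) = 1 := by rw [← Real.exp_add]; simp
  linear_combination (-ff s a (b+1) x) * this

lemma ff_pow_deriv (b : ℕ) (x : ℝ) : HasDerivAt (fun x : ℝ => x^(b+1) / ((b+1).factorial : ℝ)) (x^b / (b.factorial : ℝ)) x := by
  have h := (hasDerivAt_pow (b+1) x).div_const ((b+1).factorial : ℝ)
  refine hda_congr h rfl ?_
  rw [Nat.factorial_succ]; push_cast
  have : (b.factorial : ℝ) ≠ 0 := by positivity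
  have : (b:ℝ)+1 ≠ 0 := by positivity
  field_simp

lemma ff_deriv2 (s : ℝ) (a b : ℕ) (x : ℝ) :
    HasDerivAt (ff s (a+2) b) (s * ff s (a+2) b x + ff s (a+1) b x) x := by
  cases b with
  | succ b => exact ff_deriv1 s (a+1) b x
  | zero =>
    have h2 : HasDerivAt (fun x => Real.exp (s*x)) (Real.exp (s*x) * s) x := by
      simpa using ((hasDerivAt_id x).const_mul s).exp
    have := h2.mul (ff_pow_deriv a x)
    simp only [ff]
    refine hda_congr this rfl ?_
    ring

lemma ff_zero (s : ℝ) (a b : ℕ) : ff s (a+1) (b+1) 0 = 0 := by simp [ff]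

lemma ode_zero (s : ℝ) (D : ℝ → ℝ) (h : ∀ x, HasDerivAt D (s * D x) x) (h0 : D 0 = 0) (x : ℝ) : D x = 0 := by
  have h2 : ∀ x, HasDerivAt (fun x => Real.exp (-s*x)) (Real.exp (-s*x) * (-s)) x := fun x => by
    simpa using ((hasDerivAt_id x).const_mul (-s)).exp
  have h3 : ∀ x, HasDerivAt (fun x => Real.exp (-s*x) * D x) 0 x := fun x => by
    refine hda_congr ((h2 x).mul (h x)) rfl ?_; ring
  have := is_const_of_deriv_eq_zero (fun x => (h3 x).differentiableAt) (fun x => (h3 x).deriv) x 0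
  simp only [h0, mul_zero, mul_eq_zero] at this
  exact this.resolve_left (Real.exp_pos _).ne'

lemma ff_id (s : ℝ) (a b : ℕ) (x : ℝ) :
    s * ff s (a+1) (b+1) x = ff s (a+1) b x - ff s a (b+1) x := by
  suffices h : s * ff s (a+1) (b+1) x - ff s (a+1) b x + ff s a (b+1) x = 0 by linarith
  induction a generalizing x with
  | zero =>
    refine ode_zero s (fun x => s * ff s (0+1) (b+1) x - ff s (0+1) b x + ff s 0 (b+1) x) ?_ ?_ x
    · intro x
      cases b with
      | zero =>
        have h1 := (ff_deriv1 s 0 0 x).const_mul s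
        have h2 : HasDerivAt (fun x => Real.exp (s*x)) (Real.exp (s*x) * s) x := by
          simpa using ((hasDerivAt_id x).const_mul s).exp
        have h3 := (h1.sub h2).add_const 1
        refine hda_congr h3 ?_ ?_
        · ext x; simp [ff]
        · simp [ff]; ring
      | succ b =>
        have h1 := (ff_deriv1 s 0 (b+1) x).const_mul s
        have h2 := (ff_deriv1 s 0 b x)
        have h3 := (h1.sub h2).add (ff_pow_deriv b x)
        refine hda_congr h3 ?_ ?_
        · ext x; simp only [ff, Pi.add_apply, Pi.sub_apply]
        · simp only [ff]; ring
    · rw [ff_zero]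
      cases b with
      | zero => simp [ff]
      | succ b => rw [ff_zero]; simp [ff]
  | succ a ih =>
    refine ode_zero s (fun x => s * ff s (a+1+1) (b+1) x - ff s (a+1+1) b x + ff s (a+1) (b+1) x) ?_ ?_ x
    · intro x
      have h3 := (((ff_deriv1 s (a+1) b x).const_mul s).sub (ff_deriv2 s a b x)).add (ff_deriv1 s a b x)
      refine hda_congr h3 rfl ?_
      linear_combination -(ih x)
    · simp only [ff_zero]
      cases b with
      | zero => simp [ff]
      | succ b => rw [ff_zero]; simp

lemma ff_deriv3 (s : ℝ) (a b : ℕ) (x : ℝ) :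
    HasDerivAt (ff s (a+1) (b+1)) (ff s (a+1) b x) x := by
  refine hda_congr (ff_deriv1 s a b x) rfl ?_
  linear_combination -(ff_id s a b x)

lemma ff_nonneg (s : ℝ) (a b : ℕ) (x : ℝ) (hx : 0 ≤ x) : 0 ≤ ff s a b x := by
  induction a generalizing b x with
  | zero => cases b <;> simp only [ff] <;> positivity
  | succ a ih =>
    cases b with
    | zero => simp only [ff]; positivity
    | succ b =>
      simp only [ff]
      refine mul_nonneg (by positivity) (intervalIntegral.integral_nonneg hx fun t ht => ?_)
      exact mul_nonneg (by positivity) (ih _ _ ht.1)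

lemma ff_tele (s : ℝ) (n : ℕ) (x y : ℝ) :
    s * ∑ a ∈ Finset.range (n+1), (ff s a (n+1-a) x * ff (-s) (a+1) (n+1-a) y
        - ff s (a+1) (n+1-a) x * ff (-s) (a+1) (n-a) y)
      = ff s 0 (n+1) x * ff (-s) 0 (n+1) y - ff s (n+1) 0 x * ff (-s) (n+1) 0 y := by
  have := Finset.sum_range_sub' (fun a => ff s a (n+1-a) x * ff (-s) a (n+1-a) y) (n+1)
  simp only [Nat.sub_zero, Nat.sub_self] at this
  rw [← this, Finset.mul_sum]
  refine Finset.sum_congr rfl fun a ha => ?_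
  have ha : a ≤ n := by simpa [Nat.lt_succ_iff] using ha
  obtain ⟨b, rfl⟩ := Nat.exists_eq_add_of_le ha
  have e1 : a + b + 1 - a = b + 1 := by omega
  have e2 : a + b - a = b := by omega
  have e3 : a + b + 1 - (a+1) = b := by omega
  rw [e1, e2, e3]
  have i1 := ff_id s a b x
  have i2 := ff_id (-s) a b y
  linear_combination (-ff s a (b+1) x) * i2 - ff (-s) (a+1) b y * i1

lemma ff_key (s : ℝ) (hs : s ≠ 0) (n : ℕ) (A : ℝ) :
    ∑ a ∈ Finset.range (n+1), ff s (a+1) (n+1-a) A * ff (-s) (a+1) (n+1-a) A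
     = ∫ t in (0:ℝ)..A, (2 / s * Real.sinh (s*t)) * ((A^2-t^2)^n / ((n.factorial : ℝ))^2) := by
  set g : ℝ → ℝ := fun t => Real.exp (s*t) *
    ∑ a ∈ Finset.range (n+1), ff s (a+1) (n+1-a) (A-t) * ff (-s) (a+1) (n+1-a) (A+t) with hg
  have hd : ∀ t, HasDerivAt g (-((2 / s * Real.sinh (s*t)) * ((A^2-t^2)^n / ((n.factorial : ℝ))^2))) t := by
    intro t
    have h2 : HasDerivAt (fun x => Real.exp (s*x)) (Real.exp (s*t) * s) t := by
      simpa using ((hasDerivAt_id t).const_mul s).exp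
    have hS : HasDerivAt (fun t => ∑ a ∈ Finset.range (n+1), ff s (a+1) (n+1-a) (A-t) * ff (-s) (a+1) (n+1-a) (A+t))
      (∑ a ∈ Finset.range (n+1), (-(s * ff s (a+1) (n+1-a) (A-t) + ff s a (n+1-a) (A-t)) * ff (-s) (a+1) (n+1-a) (A+t)
        + ff s (a+1) (n+1-a) (A-t) * ff (-s) (a+1) (n-a) (A+t))) t := by
      refine HasDerivAt.fun_sum fun a ha => ?_
      have ha : a ≤ n := by simpa [Nat.lt_succ_iff] using ha
      obtain ⟨b, rfl⟩ := Nat.exists_eq_add_of_le ha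
      have e1 : a + b + 1 - a = b + 1 := by omega
      have e2 : a + b - a = b := by omega
      rw [e1, e2]
      have k1 := (ff_deriv1 s a b (A-t)).comp_const_sub A t
      have k2 := (ff_deriv3 (-s) a b (A+t)).comp_const_add A t
      exact k1.mul k2
    have h3 := h2.mul hS
    refine hda_congr h3 rfl ?_
    have T := ff_tele s n (A-t) (A+t)
    have e4 : Real.exp (s*t) * (s * ∑ a ∈ Finset.range (n+1), ff s (a+1) (n+1-a) (A-t) * ff (-s) (a+1) (n+1-a) (A+t)
       + ∑ a ∈ Finset.range (n+1), (-(s * ff s (a+1) (n+1-a) (A-t) + ff s a (n+1-a) (A-t)) * ff (-s) (a+1) (n+1-a) (A+t)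
        + ff s (a+1) (n+1-a) (A-t) * ff (-s) (a+1) (n-a) (A+t)))
      = - Real.exp (s*t) * ∑ a ∈ Finset.range (n+1), (ff s a (n+1-a) (A-t) * ff (-s) (a+1) (n+1-a) (A+t)
        - ff s (a+1) (n+1-a) (A-t) * ff (-s) (a+1) (n-a) (A+t)) := by
      rw [neg_mul, ← mul_neg]
      congr 1
      rw [Finset.mul_sum, ← Finset.sum_add_distrib, ← Finset.sum_neg_distrib]
      refine Finset.sum_congr rfl fun a _ => ?_
      ring
    have e5 : ∀ X Y : ℝ, Real.exp (s*t) * s * X + Real.exp (s*t) * Y = Real.exp (s*t) * (s * X + Y) := by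
      intros; ring
    rw [e5, e4]
    have T2 : ∑ a ∈ Finset.range (n+1), (ff s a (n+1-a) (A-t) * ff (-s) (a+1) (n+1-a) (A+t)
        - ff s (a+1) (n+1-a) (A-t) * ff (-s) (a+1) (n-a) (A+t)) = 1/s * (ff s 0 (n+1) (A-t) * ff (-s) 0 (n+1) (A+t) - ff s (n+1) 0 (A-t) * ff (-s) (n+1) 0 (A+t)) := by
      rw [← T]; field_simp
    rw [T2]
    simp only [ff]
    rw [show A^2-t^2 = (A-t)*(A+t) by ring, mul_pow, Real.sinh_eq]
    have E : Real.exp (s*t) * (Real.exp (s*(A-t)) * Real.exp (-s*(A+t))) = Real.exp (-(s*t)) := by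
      rw [← Real.exp_add, ← Real.exp_add]; congr 1; ring
    have hn : (n.factorial : ℝ) ≠ 0 := by positivity
    have : ∀ P Q : ℝ, -Real.exp (s * t) * (1 / s * (P / ↑n.factorial * (Q / ↑n.factorial) - Real.exp (s * (A - t)) * (P / ↑n.factorial) * (Real.exp (-s * (A + t)) * (Q / ↑n.factorial)))) = -(1/s) * (Real.exp (s*t) - Real.exp (s*t) * (Real.exp (s*(A-t)) * Real.exp (-s*(A+t)))) * (P * Q) / (n.factorial : ℝ)^2 := by
      intro P Q; field_simp
    rw [this, E]
    field_simp
  have hI := intervalIntegral.integral_eq_sub_of_hasDerivAt (a := 0) (b := A) (fun t _ => hd t)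
    (Continuous.intervalIntegrable (by fun_prop) _ _)
  rw [intervalIntegral.integral_neg] at hI
  have g0 : g 0 = ∑ a ∈ Finset.range (n+1), ff s (a+1) (n+1-a) A * ff (-s) (a+1) (n+1-a) A := by
    simp [hg]
  have gA : g A = 0 := by
    simp only [hg]
    rw [Finset.sum_eq_zero, mul_zero]
    intro a ha
    have ha : a ≤ n := by simpa [Nat.lt_succ_iff] using ha
    obtain ⟨b, rfl⟩ := Nat.exists_eq_add_of_le ha
    have e1 : a + b + 1 - a = b + 1 := by omega
    rw [e1, sub_self, ff_zero, zero_mul]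
  rw [← g0]
  linarith


lemma beta_int (A : ℝ) (n : ℕ) : ∀ p : ℕ, ∫ t in (0:ℝ)..A, 2 * t^(2*p+1) * (A^2-t^2)^n
    = (p.factorial : ℝ) * n.factorial / (p+n+1).factorial * A^(2*(p+n+1)) := by
  induction n with
  | zero =>
    intro p
    simp only [pow_zero, mul_one]
    rw [intervalIntegral.integral_const_mul, integral_pow]
    have : ((p+0+1).factorial : ℝ) = (p+1) * p.factorial := by
      rw [add_zero, Nat.factorial_succ]; push_cast; ring
    rw [this]
    have : (p.factorial : ℝ) ≠ 0 := by positivity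
    have : (p:ℝ)+1 ≠ 0 := by positivity
    simp
    have : (2*(p:ℝ)+1+1) ≠ 0 := by positivity
    field_simp
    ring
  | succ n ih =>
    intro p
    have hd : ∀ t : ℝ, HasDerivAt (fun t : ℝ => t^(2*p+2) * (A^2-t^2)^(n+1))
        ((p+1) * (2 * t^(2*p+1) * (A^2-t^2)^(n+1)) - (n+1) * (2 * t^(2*(p+1)+1) * (A^2-t^2)^n)) t := by
      intro t
      have h1 := hasDerivAt_pow (2*p+2) t
      have h2 := ((hasDerivAt_pow 2 t).const_sub (A^2)).pow (n+1)
      refine (h1.mul h2).congr_deriv ?_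
      simp
      ring
    have hI := intervalIntegral.integral_eq_sub_of_hasDerivAt (a := 0) (b := A) (fun t _ => hd t)
      (Continuous.intervalIntegrable (by fun_prop) _ _)
    rw [intervalIntegral.integral_sub (Continuous.intervalIntegrable (by fun_prop) _ _)
      (Continuous.intervalIntegrable (by fun_prop) _ _), intervalIntegral.integral_const_mul,
      intervalIntegral.integral_const_mul, ih (p+1)] at hI
    simp only [sub_self, ne_eq, Nat.add_eq_zero_iff, one_ne_zero, and_false, not_false_eq_true, zero_pow, mul_zero,
      OfNat.ofNat_ne_zero, zero_mul] at hI
    have e : p + 1 + n + 1 = p + (n+1) + 1 := by ring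
    rw [e] at hI
    have : (p:ℝ)+1 ≠ 0 := by positivity
    have h3 : ((p+(n+1)+1).factorial : ℝ) ≠ 0 := by positivity
    apply mul_left_cancel₀ this
    have e1 : ((p+1).factorial : ℝ) = (p+1) * p.factorial := by
      rw [Nat.factorial_succ]; push_cast; ring
    have e2 : ((n+1).factorial : ℝ) = (n+1) * n.factorial := by
      rw [Nat.factorial_succ]; push_cast; ring
    rw [e1] at hI
    rw [e2]
    rw [sub_eq_zero] at hI
    rw [hI]
    ring

lemma sinh_series (s : ℝ) (hs : s ≠ 0) (A : ℝ) (hA : 0 ≤ A) (n : ℕ) :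
    HasSum (fun p : ℕ => s^(2*p) * A^(2*(p+1+n)) * (p.factorial : ℝ) / ((2*p+1).factorial * (p+1+n).factorial * n.factorial))
      (∫ t in (0:ℝ)..A, (2 / s * Real.sinh (s*t)) * ((A^2-t^2)^n / ((n.factorial : ℝ))^2)) := by
  have key : ∀ t : ℝ, HasSum (fun p : ℕ => s^(2*p) / ((2*p+1).factorial * (n.factorial:ℝ)^2) * (2 * t^(2*p+1) * (A^2-t^2)^n))
      ((2 / s * Real.sinh (s*t)) * ((A^2-t^2)^n / ((n.factorial : ℝ))^2)) := by
    intro t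
    have h := ((Real.hasSum_sinh (s*t)).mul_left (2/s)).mul_right ((A^2-t^2)^n / ((n.factorial : ℝ))^2)
    refine h.congr_fun ?_
    intro p
    rw [mul_pow]
    field_simp
    ring
  have h := intervalIntegral.hasSum_integral_of_dominated_convergence (μ := volume) (a := 0) (b := A)
    (F := fun (p : ℕ) (t : ℝ) => s^(2*p) / ((2*p+1).factorial * (n.factorial:ℝ)^2) * (2 * t^(2*p+1) * (A^2-t^2)^n))
    (f := fun t => (2 / s * Real.sinh (s*t)) * ((A^2-t^2)^n / ((n.factorial : ℝ))^2))
    (fun p _ => s^(2*p) / ((2*p+1).factorial * (n.factorial:ℝ)^2) * (2 * A^(2*p+1) * (A^2)^n))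
    (fun p => Continuous.aestronglyMeasurable (by fun_prop))
    (fun p => Filter.Eventually.of_forall fun t ht => ?_)
    (Filter.Eventually.of_forall fun t ht => ?_)
    (by simp) 
    (Filter.Eventually.of_forall fun t ht => key t)
  · refine h.congr_fun ?_
    intro p
    rw [intervalIntegral.integral_const_mul, beta_int, show p+1+n = p+n+1 by ring]
    field_simp
  · rw [Set.uIoc_of_le hA] at ht
    have h1 : 0 ≤ A^2 - t^2 := by nlinarith [ht.1, ht.2]
    have h0 : 0 ≤ t := ht.1.le
    have h3 : 0 ≤ s^(2*p) := by rw [pow_mul]; positivity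
    rw [Real.norm_of_nonneg (by positivity)]
    gcongr
    · exact ht.2
    · nlinarith
  · have h := ((Real.hasSum_sinh (s*A)).mul_left (2/s)).mul_right ((A^2)^n / ((n.factorial : ℝ))^2)
    refine h.summable.congr ?_
    intro p
    rw [mul_pow]
    field_simp
    ring


noncomputable def pos (h : ℝ → ℝ) : ℝ → ℝ≥0∞ := (Set.Ioi (0:ℝ)).indicator (fun x => ENNReal.ofReal (h x))

lemma pos_meas {h : ℝ → ℝ} (hh : Measurable h) : Measurable (pos h) :=
  (hh.ennreal_ofReal).indicator measurableSet_Ioi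

noncomputable def RR : ℕ → (ℕ → ℝ → ℝ≥0∞) → ℝ → ℝ≥0∞
  | 0, F => F 0
  | n+1, F => F 0 ⋆ₗ RR n (fun i => F (i+1))

lemma RR_meas (n : ℕ) (F : ℕ → ℝ → ℝ≥0∞) (hF : ∀ i, Measurable (F i)) : Measurable (RR n F) := by
  induction n generalizing F with
  | zero => exact hF 0
  | succ n ih =>
    simp only [RR]
    exact measurable_lconvolution _ (hF 0) (ih _ fun i => hF _)

lemma simplex_RR (n : ℕ) (F : ℕ → ℝ → ℝ≥0∞) (hF : ∀ i, Measurable (F i)) (A : ℝ) :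
    ∫⁻ v : Fin n → ℝ, (∏ i : Fin n, F i (v i)) * F n (A - ∑ i, v i) = RR n F A := by
  induction n generalizing F A with
  | zero => simp [RR, volume_pi, Measure.pi_of_empty]
  | succ n ih =>
    have := hF
    simp only [RR, lconvolution_def]
    rw [← (volume_preserving_piFinSuccAbove (fun _ : Fin (n + 1) => ℝ) 0).symm.lintegral_comp (by fun_prop)]
    rw [Measure.volume_eq_prod, lintegral_prod _ (by fun_prop)]
    refine lintegral_congr fun y => ?_
    rw [← ih _ (fun i => hF _), ← lintegral_const_mul _ (by fun_prop)]
    refine lintegral_congr fun w => ?_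
    simp [MeasurableEquiv.piFinSuccAbove, Fin.prod_univ_succ, Fin.sum_univ_succ, mul_assoc]
    congr 3
    ring

lemma conv_pos (g h : ℝ → ℝ) (x : ℝ) :
    (pos g ⋆ₗ pos h) x = ∫⁻ t in Set.Ioo 0 x, ENNReal.ofReal (g t) * ENNReal.ofReal (h (x-t)) := by
  rw [lconvolution_def, ← lintegral_indicator measurableSet_Ioo]
  refine lintegral_congr fun t => ?_
  by_cases h1 : 0 < t <;> by_cases h2 : t < x <;> simp [pos, Set.indicator, h1, h2, sub_eq_neg_add]

noncomputable def EE (s : ℝ) : ℝ → ℝ≥0∞ := pos (fun x => Real.exp (s*x))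

lemma EE_meas (s : ℝ) : Measurable (EE s) := pos_meas (by fun_prop)

lemma conv_EE (s : ℝ) (h : ℝ → ℝ) (hc : Continuous h) (h0 : ∀ x, 0 ≤ x → 0 ≤ h x) :
    EE s ⋆ₗ pos h = pos (fun x => Real.exp (s*x) * ∫ t in (0:ℝ)..x, Real.exp (-(s*t)) * h t) := by
  rw [lconvolution_comm]
  ext x
  rw [EE, conv_pos]
  by_cases hx : 0 < x
  · simp only [pos, Set.indicator, Set.mem_Ioi, hx, if_true]
    rw [← intervalIntegral.integral_const_mul, intervalIntegral.integral_of_le hx.le, integral_Ioc_eq_integral_Ioo,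
      ofReal_integral_eq_lintegral_ofReal]
    · refine setLIntegral_congr_fun measurableSet_Ioo fun t ht => ?_
      rw [← ENNReal.ofReal_mul (h0 _ ht.1.le)]
      congr 1
      rw [← mul_assoc, ← Real.exp_add, mul_comm]
      congr 2; ring
    · exact (Continuous.integrableOn_Icc (by fun_prop)).mono_set Set.Ioo_subset_Icc_self
    · refine (ae_restrict_iff' measurableSet_Ioo).2 (Filter.Eventually.of_forall fun t ht => ?_)
      have := h0 t ht.1.le
      simp only [Pi.zero_apply]; positivity
  · rw [Set.Ioo_eq_empty (by simpa using hx)]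
    simp [pos, Set.indicator, hx]

/-- a copies of `E_s` then `E_0`. -/
noncomputable def GG (s : ℝ) (a : ℕ) : ℕ → ℝ → ℝ≥0∞ := fun i => if i < a then EE s else EE 0

lemma GG_meas (s : ℝ) (a i : ℕ) : Measurable (GG s a i) := by
  unfold GG; split_ifs <;> exact EE_meas _

lemma GG_shift (s : ℝ) (a : ℕ) : (fun i => GG s (a+1) (i+1)) = GG s a := by
  ext i; simp [GG]

lemma GG_shift0 (s : ℝ) : (fun i => GG s 0 (i+1)) = GG s 0 := by
  ext i; simp [GG]

lemma RR_GG0 (s : ℝ) (n : ℕ) : RR n (GG s 0) = pos (ff s 0 (n+1)) := by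
  induction n with
  | zero => ext x; simp [RR, GG, EE, ff]
  | succ n ih =>
    rw [RR, GG_shift0, ih]
    simp only [GG, Nat.not_lt_zero, if_false]
    rw [conv_EE _ _ (ff_cont _ _ _) (fun x hx => ff_nonneg s _ _ x hx)]
    congr 1
    ext x
    simp only [ff, zero_mul, Real.exp_zero, neg_zero, one_mul]
    rw [intervalIntegral.integral_div, integral_pow, Nat.factorial_succ]
    push_cast
    field_simp
    simp

lemma RR_GG (s : ℝ) (a b : ℕ) : RR (a+b) (GG s a) = pos (ff s a (b+1)) := by
  induction a with
  | zero => rw [zero_add, RR_GG0]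
  | succ a ih =>
    rw [show a + 1 + b = (a+b)+1 by ring, RR, GG_shift, ih]
    simp only [GG, Nat.zero_lt_succ, if_true]
    rw [conv_EE _ _ (ff_cont _ _ _) (fun x hx => ff_nonneg s _ _ x hx)]
    simp only [ff]

lemma smul_conv (c : ℝ≥0∞) (f g : ℝ → ℝ≥0∞) (hf : Measurable f) (hg : Measurable g) :
    (c • f) ⋆ₗ g = c • (f ⋆ₗ g) := by
  ext x
  simp only [lconvolution_def, Pi.smul_apply, smul_eq_mul, mul_assoc]
  rw [lintegral_const_mul _ (by fun_prop)]

lemma conv_smul_s8 (c : ℝ≥0∞) (f g : ℝ → ℝ≥0∞) (hf : Measurable f) (hg : Measurable g) :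
    f ⋆ₗ (c • g) = c • (f ⋆ₗ g) := by
  rw [lconvolution_comm, smul_conv _ _ _ hg hf, lconvolution_comm]

noncomputable def HH (s : ℝ) (ψ : ℝ → ℝ≥0∞) (m : ℕ) : ℕ → ℝ → ℝ≥0∞ :=
  fun i => if i < m then EE s else if i = m then ψ else EE 0

lemma HH_meas (s : ℝ) (ψ : ℝ → ℝ≥0∞) (hψ : Measurable ψ) (a i : ℕ) : Measurable (HH s ψ a i) := by
  unfold HH; split_ifs <;> first | exact EE_meas _ | exact hψ

lemma HH_shift (s : ℝ) (ψ : ℝ → ℝ≥0∞) (a : ℕ) : (fun i => HH s ψ (a+1) (i+1)) = HH s ψ a := by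
  ext i; simp [HH]

lemma HH_shift0 (s : ℝ) (ψ : ℝ → ℝ≥0∞) : (fun i => HH s ψ 0 (i+1)) = GG s 0 := by
  ext i; simp [HH, GG]

lemma conv_HH (s : ℝ) (φ ψ : ℝ → ℝ≥0∞) (hφ : Measurable φ) (hψ : Measurable ψ) (c : ℝ≥0∞)
    (h : φ ⋆ₗ ψ = c • (EE s ⋆ₗ EE 0)) (m b : ℕ) :
    φ ⋆ₗ RR (m+b) (HH s ψ m) = c • RR (m+b+1) (GG s (m+1)) := by
  have m1 := EE_meas s
  have m0 := EE_meas 0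
  induction m with
  | zero =>
    rw [zero_add]
    cases b with
    | zero => simp only [RR, HH, GG]; simpa using h
    | succ b =>
      have mr : Measurable (RR b (GG s 0)) := RR_meas _ _ (GG_meas s 0)
      rw [RR, RR, HH_shift0, GG_shift, RR, GG_shift0]
      have e1 : HH s ψ 0 0 = ψ := by simp [HH]
      have e2 : GG s (0+1) 0 = EE s := by simp [GG]
      have e3 : GG s 0 0 = EE 0 := by simp [GG]
      rw [e1, e2, e3, lconvolution_assoc hφ hψ mr, h, smul_conv _ _ _ (by fun_prop) mr,
        lconvolution_assoc m1 m0 mr]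
  | succ m ih =>
    rw [show m + 1 + b = (m+b)+1 by ring, RR, HH_shift, RR, GG_shift]
    have e1 : HH s ψ (m+1) 0 = EE s := by simp [HH]
    have e2 : GG s (m+1+1) 0 = EE s := by simp [GG]
    have mr : Measurable (RR (m+b) (HH s ψ m)) := RR_meas _ _ (HH_meas s ψ hψ m)
    rw [e1, e2, lconvolution_assoc hφ m1 mr, lconvolution_comm (f := φ), ← lconvolution_assoc m1 hφ mr, ih,
      conv_smul_s8 _ _ _ m1 (RR_meas _ _ (GG_meas s _))]


lemma lint_gamma {a r : ℝ} (ha : 0 < a) (hr : 0 < r) :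
    ∫⁻ t in Set.Ioi (0:ℝ), ENNReal.ofReal (t^(a-1) * Real.exp (-(r*t))) = ENNReal.ofReal ((1/r)^a * Real.Gamma a) := by
  rw [← Real.integral_rpow_mul_exp_neg_mul_Ioi ha hr, ofReal_integral_eq_lintegral_ofReal]
  · have := integrableOn_rpow_mul_exp_neg_mul_rpow (p := 1) (s := a-1) (b := r) (by linarith) one_pos hr
    have h2 : IntegrableOn (fun t : ℝ => t^(a-1) * Real.exp (-(r*t))) (Set.Ioi 0) := by simpa using this
    exact h2
  · refine (ae_restrict_iff' measurableSet_Ioi).2 (Filter.Eventually.of_forall fun t ht => ?_)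
    have ht : 0 < t := ht
    simp only [Pi.zero_apply]; positivity

/-- `∫ y^s/(1+θy)^2 = Γ(1+s)Γ(1-s) θ^{-1-s}` -/
lemma lint_beta {s θ : ℝ} (hs : |s| < 1) (hθ : 0 < θ) :
    ∫⁻ y in Set.Ioi (0:ℝ), ENNReal.ofReal (y^s * (1/(1+θ*y))^2)
      = ENNReal.ofReal (Real.Gamma (1+s) * Real.Gamma (1-s) * θ^(-1-s)) := by
  obtain ⟨hs1, hs2⟩ := abs_lt.1 hs
  have e1 : ∀ y ∈ Set.Ioi (0:ℝ), ENNReal.ofReal (y^s * (1/(1+θ*y))^2)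
      = ∫⁻ t in Set.Ioi (0:ℝ), ENNReal.ofReal (y^s * (t * Real.exp (-((1+θ*y)*t)))) := by
    intro y hy
    have hy : 0 < y := hy
    have h := lint_gamma (a := 2) (r := 1+θ*y) (by norm_num) (by positivity)
    rw [ENNReal.ofReal_mul (by positivity)]
    have h2 : ENNReal.ofReal ((1/(1+θ*y))^2) = ∫⁻ t in Set.Ioi (0:ℝ), ENNReal.ofReal (t * Real.exp (-((1+θ*y)*t))) := by
      norm_num at h
      norm_num
      exact h.symm
    rw [h2, ← lintegral_const_mul _ (by fun_prop)]
    refine lintegral_congr fun t => ?_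
    rw [← ENNReal.ofReal_mul (by positivity)]
  rw [setLIntegral_congr_fun measurableSet_Ioi e1, lintegral_lintegral_swap (by fun_prop)]
  have e2 : ∀ t ∈ Set.Ioi (0:ℝ), ∫⁻ y in Set.Ioi (0:ℝ), ENNReal.ofReal (y^s * (t * Real.exp (-((1+θ*y)*t))))
      = ENNReal.ofReal (Real.Gamma (1+s) * θ^(-1-s)) * ENNReal.ofReal (t^((1-s)-1) * Real.exp (-(1*t))) := by
    intro t ht
    have ht : 0 < t := ht
    have h := lint_gamma (a := 1+s) (r := θ*t) (by linarith) (by positivity)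
    have : ∀ y, ENNReal.ofReal (y^s * (t * Real.exp (-((1+θ*y)*t)))) = ENNReal.ofReal (t * Real.exp (-t)) * ENNReal.ofReal (y^(1+s-1) * Real.exp (-(θ*t*y))) := by
      intro y
      rw [← ENNReal.ofReal_mul (by positivity)]
      congr 1
      rw [show -((1+θ*y)*t) = -t + -(θ*t*y) by ring, Real.exp_add, show 1+s-1 = s by ring]
      ring
    simp_rw [this]
    have G : 0 < Real.Gamma (1+s) := Real.Gamma_pos_of_pos (by linarith)
    rw [lintegral_const_mul _ (by fun_prop), h, ← ENNReal.ofReal_mul (by positivity), ← ENNReal.ofReal_mul (by positivity)]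
    congr 1
    rw [one_div, ← Real.rpow_neg_one, ← Real.rpow_mul (by positivity), Real.mul_rpow hθ.le ht.le,
      show 1 - s - 1 = 1 + (-1 * (1+s)) by ring, Real.rpow_add ht, Real.rpow_one, show -1 - s = -1 * (1+s) by ring, one_mul]
    ring
  rw [setLIntegral_congr_fun measurableSet_Ioi e2, lintegral_const_mul _ (by fun_prop), lint_gamma (by linarith) one_pos]
  have G : 0 < Real.Gamma (1+s) := Real.Gamma_pos_of_pos (by linarith)
  rw [← ENNReal.ofReal_mul (by positivity)]
  congr 1
  simp
  ring

lemma gamma_refl {s : ℝ} (hs : s ≠ 0) : Real.Gamma (1+s) * Real.Gamma (1-s) = π * s / Real.sin (π * s) := by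
  rw [add_comm, Real.Gamma_add_one hs, mul_assoc, Real.Gamma_mul_Gamma_one_sub]
  ring

lemma lint_theta {s q : ℝ} (hs : s ≠ 0) (hq : 0 < q) (hq1 : q < 1) :
    ∫⁻ θ in Set.Ioo q 1, ENNReal.ofReal (θ^(-1-s)) = ENNReal.ofReal ((q^(-s) - 1)/s) := by
  have hI : ∫ θ in q..1, θ^(-1-s) = (q^(-s) - 1)/s := by
    rw [integral_rpow]
    · rw [show -1-s+1 = -s by ring, Real.one_rpow]
      field_simp
      ring
    · right
      refine ⟨fun h => hs (by linarith), ?_⟩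
      rw [Set.uIcc_of_le hq1.le]
      exact fun h => absurd h.1 (by linarith)
  rw [← hI, intervalIntegral.integral_of_le hq1.le, integral_Ioc_eq_integral_Ioo, ofReal_integral_eq_lintegral_ofReal]
  · refine (ContinuousOn.integrableOn_Icc ?_).mono_set Set.Ioo_subset_Icc_self
    refine ContinuousOn.rpow_const continuousOn_id fun x hx => Or.inl (by have := hx.1; simp; linarith)
  · refine (ae_restrict_iff' measurableSet_Ioo).2 (Filter.Eventually.of_forall fun t ht => ?_)
    have : 0 < t := lt_trans hq ht.1
    simp only [Pi.zero_apply]; positivity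

lemma lint_inv_sq {y q : ℝ} (hy : 0 < y) (hq : 0 < q) (hq1 : q < 1) :
    ∫⁻ θ in Set.Ioo q 1, ENNReal.ofReal ((1/(1+θ*y))^2) = ENNReal.ofReal ((1-q)/((1+y)*(1+q*y))) := by
  have hpos : ∀ θ ∈ Set.Icc q 1, 0 < 1 + θ * y := fun θ h => by
    have : 0 < θ := lt_of_lt_of_le hq h.1
    positivity
  have hc : ContinuousOn (fun θ => (1/(1+θ*y))^2) (Set.Icc q 1) := by
    refine ContinuousOn.pow (ContinuousOn.div (by fun_prop) (by fun_prop) fun θ h => (hpos θ h).ne') 2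
  have hI : ∫ θ in q..1, (1/(1+θ*y))^2 = (1-q)/((1+y)*(1+q*y)) := by
    have hd : ∀ θ ∈ Set.uIcc q 1, HasDerivAt (fun θ => -(1/y) * (1+θ*y)⁻¹) ((1/(1+θ*y))^2) θ := by
      intro θ h
      rw [Set.uIcc_of_le hq1.le] at h
      have h0 := (hpos θ h).ne'
      have h1 : HasDerivAt (fun θ => 1+θ*y) y θ := by
        simpa using ((hasDerivAt_id θ).mul_const y).const_add 1
      refine ((h1.inv h0).const_mul (-(1/y))).congr_deriv ?_
      field_simp
    rw [intervalIntegral.integral_eq_sub_of_hasDerivAt hd]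
    · have : 0 < 1 + q*y := by positivity
      field_simp
      ring
    · rw [intervalIntegrable_iff_integrableOn_Icc_of_le hq1.le]
      exact hc.integrableOn_Icc
  rw [← hI, intervalIntegral.integral_of_le hq1.le, integral_Ioc_eq_integral_Ioo, ofReal_integral_eq_lintegral_ofReal]
  · exact hc.integrableOn_Icc.mono_set Set.Ioo_subset_Icc_self
  · exact Filter.Eventually.of_forall fun t => by simp only [Pi.zero_apply]; positivity

lemma lint_y {s q : ℝ} (hs0 : s ≠ 0) (hs : |s| < 1) (hq : 0 < q) (hq1 : q < 1) :
    ∫⁻ y in Set.Ioi (0:ℝ), ENNReal.ofReal (y^s) * ENNReal.ofReal ((1-q)/((1+y)*(1+q*y)))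
      = ENNReal.ofReal (π * s / Real.sin (π * s)) * ENNReal.ofReal ((q^(-s) - 1)/s) := by
  obtain ⟨hs1, hs2⟩ := abs_lt.1 hs
  have e1 : ∀ y ∈ Set.Ioi (0:ℝ), ENNReal.ofReal (y^s) * ENNReal.ofReal ((1-q)/((1+y)*(1+q*y)))
     = ∫⁻ θ in Set.Ioo q 1, ENNReal.ofReal (y^s * (1/(1+θ*y))^2) := by
    intro y hy
    have hy : 0 < y := hy
    rw [← lint_inv_sq hy hq hq1, ← lintegral_const_mul _ (by fun_prop)]
    refine lintegral_congr fun t => ?_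
    rw [← ENNReal.ofReal_mul (by positivity)]
  rw [setLIntegral_congr_fun measurableSet_Ioi e1, lintegral_lintegral_swap (by fun_prop)]
  have e2 : ∀ θ ∈ Set.Ioo q 1, ∫⁻ y in Set.Ioi (0:ℝ), ENNReal.ofReal (y^s * (1/(1+θ*y))^2)
     = ENNReal.ofReal (π * s / Real.sin (π * s)) * ENNReal.ofReal (θ^(-1-s)) := by
    intro θ hθ
    have h0 : 0 < θ := lt_trans hq hθ.1
    rw [lint_beta hs h0, ← gamma_refl hs0, ENNReal.ofReal_mul]
    exact mul_nonneg (Real.Gamma_pos_of_pos (by linarith)).le (Real.Gamma_pos_of_pos (by linarith)).le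
  rw [setLIntegral_congr_fun measurableSet_Ioo e2, lintegral_const_mul _ (by fun_prop), lint_theta hs0 hq hq1]

noncomputable def phi (s : ℝ) : ℝ → ℝ≥0∞ := pos (fun w => (1 - Real.exp (-w))^s)
noncomputable def psi (s : ℝ) : ℝ → ℝ≥0∞ := pos (fun w => Real.exp (-s*w) * (1 - Real.exp (-w))^(-s))

lemma phi_meas (s : ℝ) : Measurable (phi s) := pos_meas (by fun_prop)
lemma psi_meas (s : ℝ) : Measurable (psi s) := pos_meas (by fun_prop)

lemma ff11 (s : ℝ) (hs : s ≠ 0) (x : ℝ) : ff (-s) 1 1 x = (1 - Real.exp (-s*x))/s := by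
  have := ff_id (-s) 0 0 x
  simp only [zero_add] at this
  have h1 : ff (-s) 1 0 x = Real.exp (-s*x) := by simp [ff]
  have h2 : ff (-s) 0 1 x = 1 := by simp [ff]
  rw [h1, h2] at this
  rw [eq_div_iff hs]; linarith

lemma mobius_aux {q X : ℝ} (h3 : 1 - q * X ≠ 0) (h4 : 1 - q ≠ 0) :
    (1 + (X-1)/(1-q*X)) / (1 + q*((X-1)/(1-q*X))) = X := by
  have e1 : 1 + (X-1)/(1-q*X) = X*(1-q)/(1-q*X) := by
    rw [eq_div_iff h3, add_mul, div_mul_cancel₀ _ h3]; ring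
  have e2 : 1 + q*((X-1)/(1-q*X)) = (1-q)/(1-q*X) := by
    rw [eq_div_iff h3, add_mul, mul_assoc, div_mul_cancel₀ _ h3]; ring
  rw [e1, e2, div_div_div_cancel_right₀ h3, mul_div_cancel_right₀ _ h4]

lemma phi_psi {s : ℝ} (hs0 : s ≠ 0) (hs : |s| < 1) :
    phi s ⋆ₗ psi s = ENNReal.ofReal (π * s / Real.sin (π * s)) • (EE (-s) ⋆ₗ EE 0) := by
  have hE : EE (-s) ⋆ₗ EE 0 = pos (ff (-s) 1 1) := by
    have := RR_GG (-s) 1 0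
    simpa [RR, GG] using this
  rw [hE]
  ext A
  rw [phi, psi, conv_pos]
  by_cases hA : 0 < A
  swap
  · rw [Set.Ioo_eq_empty (by simpa using hA)]
    simp [pos, Set.indicator, hA]
  simp only [pos, Pi.smul_apply, Set.indicator, Set.mem_Ioi, hA, if_true, smul_eq_mul]
  rw [ff11 s hs0]
  set q := Real.exp (-A) with hq
  have hq0 : 0 < q := Real.exp_pos _
  have hq1 : q < 1 := by rw [hq, Real.exp_lt_one_iff]; linarith
  have hqs : Real.exp (-s*A) = q^s := by rw [hq, ← Real.exp_mul]; congr 1; ring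
  set W : ℝ → ℝ := fun y => Real.log ((1+y)/(1+q*y)) with hW
  have hexp : ∀ y, 0 < y → Real.exp (W y) = (1+y)/(1+q*y) := fun y hy => Real.exp_log (by positivity)
  have himg : W '' Set.Ioi 0 = Set.Ioo 0 A := by
    ext w
    constructor
    · rintro ⟨y, hy, rfl⟩
      have hy : 0 < y := hy
      have h := hexp y hy
      constructor
      · rw [← Real.exp_lt_exp, h, Real.exp_zero, lt_div_iff₀ (by positivity)]
        nlinarith
      · rw [← Real.exp_lt_exp, h, div_lt_iff₀ (by positivity)]
        have : Real.exp A * q = 1 := by rw [hq, ← Real.exp_add]; simp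
        have h2 : 1 < Real.exp A := Real.one_lt_exp_iff.2 hA
        nlinarith
    · intro hw
      have h1 : 1 < Real.exp w := Real.one_lt_exp_iff.2 hw.1
      have h2 : q * Real.exp w < 1 := by
        rw [hq, ← Real.exp_add, Real.exp_lt_one_iff]; linarith [hw.2]
      refine ⟨(Real.exp w - 1)/(1 - q * Real.exp w), div_pos (sub_pos.2 h1) (sub_pos.2 h2), ?_⟩
      simp only [hW]
      rw [← Real.log_exp w]
      congr 1
      rw [Real.log_exp]
      have h3 : 1 - q * Real.exp w ≠ 0 := by linarith
      have h4 : 1 - q ≠ 0 := by linarith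
      exact mobius_aux h3 h4
  have hinj : Set.InjOn W (Set.Ioi 0) := by
    intro y hy z hz h
    have hy : 0 < y := hy
    have hz : 0 < z := hz
    have := congrArg Real.exp h
    rw [hexp y hy, hexp z hz, div_eq_div_iff (by positivity) (by positivity)] at this
    have h4 : 1 - q ≠ 0 := by linarith
    apply mul_left_cancel₀ h4
    linarith
  have hder : ∀ y ∈ Set.Ioi (0:ℝ), HasDerivWithinAt W ((1-q)/((1+y)*(1+q*y))) (Set.Ioi 0) y := by
    intro y hy
    have hy : 0 < y := hy
    have h1 : HasDerivAt (fun y : ℝ => 1+y) 1 y := by simpa using (hasDerivAt_id y).const_add 1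
    have h2 : HasDerivAt (fun y : ℝ => 1+q*y) q y := by simpa using ((hasDerivAt_id y).const_mul q).const_add 1
    have p1 : 0 < 1 + y := by positivity
    have p2 : 0 < 1 + q*y := by positivity
    refine (((h1.div h2 p2.ne').log (by simp only [Pi.div_apply]; positivity)).congr_deriv ?_).hasDerivWithinAt
    simp only [Pi.div_apply]
    field_simp
    ring
  rw [← himg, lintegral_image_eq_lintegral_abs_deriv_mul measurableSet_Ioi hder hinj]
  have e : ∀ y ∈ Set.Ioi (0:ℝ), ENNReal.ofReal |(1-q)/((1+y)*(1+q*y))| * (ENNReal.ofReal ((1 - Real.exp (-(W y)))^s)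
      * ENNReal.ofReal (Real.exp (-s*(A - W y)) * (1 - Real.exp (-(A - W y)))^(-s)))
      = ENNReal.ofReal (q^s) * (ENNReal.ofReal (y^s) * ENNReal.ofReal ((1-q)/((1+y)*(1+q*y)))) := by
    intro y hy
    have hy : 0 < y := hy
    have p1 : 0 < 1 + y := by positivity
    have p2 : 0 < 1 + q*y := by positivity
    have p3 : 0 < 1 - q := by linarith
    rw [abs_of_pos (by positivity), ← mul_assoc (ENNReal.ofReal (q^s)), mul_comm]
    congr 1
    have f1 : 1 - Real.exp (-(W y)) = (1-q)*y/(1+y) := by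
      rw [Real.exp_neg, hexp y hy]; field_simp; ring
    have f2 : Real.exp (-(A - W y)) = q*((1+y)/(1+q*y)) := by
      rw [← hexp y hy, hq, ← Real.exp_add]; congr 1; ring
    have f3 : Real.exp (-s*(A - W y)) = (q*((1+y)/(1+q*y)))^s := by
      rw [← f2, ← Real.exp_mul]; congr 1; ring
    have f4 : 1 - q*((1+y)/(1+q*y)) = (1-q)/(1+q*y) := by field_simp; ring
    rw [f1, f3, f2, f4, ← ENNReal.ofReal_mul (by positivity), ← ENNReal.ofReal_mul (by positivity)]
    congr 1
    rw [Real.rpow_neg (by positivity), ← Real.inv_rpow (by positivity), ← Real.mul_rpow (by positivity) (by positivity),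
      ← Real.mul_rpow (by positivity) (by positivity), ← Real.mul_rpow (by positivity) (by positivity)]
    congr 1
    field_simp
  rw [setLIntegral_congr_fun measurableSet_Ioi e, lintegral_const_mul _ (by fun_prop), lint_y hs0 hs hq0 hq1, mul_left_comm,
    ← ENNReal.ofReal_mul (by positivity), hqs]
  congr 2
  rw [Real.rpow_neg hq0.le]
  have : 0 < q^s := by positivity
  field_simp

lemma simplex_int_s8 (N : ℕ) (G : ℕ → ℝ → ℝ) (hm : ∀ i, Measurable (G i)) (hp : ∀ i x, 0 < x → 0 ≤ G i x) (A : ℝ) :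
    ∫ v in {v : Fin N → ℝ | (∀ i, 0 < v i) ∧ ∑ i, v i < A}, (∏ i : Fin N, G i (v i)) * G N (A - ∑ i, v i)
      = (RR N (fun i => pos (G i)) A).toReal := by
  have hS : MeasurableSet {v : Fin N → ℝ | (∀ i, 0 < v i) ∧ ∑ i, v i < A} := by
    have e : {v : Fin N → ℝ | (∀ i, 0 < v i) ∧ ∑ i, v i < A} = (⋂ i, {v : Fin N → ℝ | 0 < v i}) ∩ {v : Fin N → ℝ | ∑ i, v i < A} := by
      ext v; simp
    rw [e]
    refine (MeasurableSet.iInter fun i => measurableSet_lt measurable_const (measurable_pi_apply i)).inter ?_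
    exact measurableSet_lt (f := fun v : Fin N → ℝ => ∑ i, v i) (by fun_prop) measurable_const
  rw [integral_eq_lintegral_of_nonneg_ae, ← lintegral_indicator hS, ← simplex_RR N _ (fun i => pos_meas (hm i))]
  · congr 1
    refine lintegral_congr fun v => ?_
    by_cases hv : v ∈ {v : Fin N → ℝ | (∀ i, 0 < v i) ∧ ∑ i, v i < A}
    · rw [Set.indicator_of_mem hv]
      obtain ⟨h1, h2⟩ := hv
      rw [ENNReal.ofReal_mul (Finset.prod_nonneg fun i _ => hp (i : Fin N) _ (h1 i)),
        ENNReal.ofReal_prod_of_nonneg (s := Finset.univ) (f := fun i : Fin N => G i (v i)) (fun i _ => hp i _ (h1 i))]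
      have h3 : 0 < A - ∑ i, v i := by linarith
      simp [pos, Set.indicator, h1, h2]
    · rw [Set.indicator_of_notMem hv]
      by_cases h1 : ∀ i, 0 < v i
      · have h2 : ¬ (∑ i, v i < A) := fun h => hv ⟨h1, h⟩
        simp [pos, Set.indicator, h2]
      · push Not at h1
        obtain ⟨i, hi⟩ := h1
        rw [Finset.prod_eq_zero (Finset.mem_univ i), zero_mul]
        simp [pos, Set.indicator, hi]
  · refine (ae_restrict_iff' hS).2 (Filter.Eventually.of_forall fun v hv => ?_)
    obtain ⟨h1, h2⟩ := hv
    exact mul_nonneg (Finset.prod_nonneg fun i _ => hp i _ (h1 i)) (hp _ _ (by linarith))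
  · exact Measurable.aestronglyMeasurable (by fun_prop)

lemma Ikl_eq (n a : ℕ) (ha : a ≤ n) (u L : ℝ) (hL : 0 ≤ L) :
    Ikl (n+2) (2+a) u L = ff (2*u) (a+1) (n+1-a) (L/2) := by
  obtain ⟨b, rfl⟩ := Nat.exists_eq_add_of_le ha
  have h := simplex_int_s8 (a+b+1) (fun i x => if i < a+1 then Real.exp (2*u*x) else Real.exp (0*x))
    (fun i => by split_ifs <;> fun_prop) (fun i x _ => by split_ifs <;> positivity) (L/2)
  have e : (fun i => pos (fun x => if i < a+1 then Real.exp (2*u*x) else Real.exp (0*x))) = GG (2*u) (a+1) := by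
    ext i x; unfold GG EE; split_ifs <;> rfl
  rw [e, show a+b+1 = (a+1)+b by ring, RR_GG] at h
  have e2 : Ikl (a+b+2) (2+a) u L = ∫ v in {v : Fin (a+1+b) → ℝ | (∀ i, 0 < v i) ∧ ∑ i, v i < L/2},
    (∏ i : Fin (a+1+b), (if (i:ℕ) < a+1 then Real.exp (2*u*v i) else Real.exp (0*v i))) *
      (if a+1+b < a+1 then Real.exp (2*u*(L/2 - ∑ i, v i)) else Real.exp (0*(L/2 - ∑ i, v i))) := by
    unfold Ikl
    rw [show a + b + 2 - 1 = a+1+b by omega, show 2 + a - 1 = a+1 by omega]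
    congr 1
    ext v
    rw [Finset.mul_sum, Real.exp_sum, Finset.prod_filter]
    simp
    intro h; omega
  rw [e2, h, show a+b+1-a = b+1 by omega]
  rcases hL.eq_or_lt with h0 | h0
  · rw [← h0]; simp [pos, ff_zero]
  · have : 0 < L/2 := by positivity
    simp only [pos, Set.indicator, Set.mem_Ioi, this, if_true]
    exact ENNReal.toReal_ofReal (ff_nonneg _ _ _ _ this.le)

lemma Itkl_eq (n a : ℕ) (ha : a ≤ n) (u L : ℝ) (hu0 : 0 < |u|) (hu : |u| < 1/2) (hL : 0 ≤ L) :
    Itkl (n+2) (2+a) u L = (π * (2*u) / Real.sin (π * (2*u))) * ff (-(2*u)) (a+1) (n+1-a) (L/2) := by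
  have hs0 : 2*u ≠ 0 := by simpa using hu0
  have hs : |2*u| < 1 := by rw [abs_mul, abs_two]; linarith
  obtain ⟨hs1, hs2⟩ := abs_lt.1 hs
  set s := 2*u with hsdef
  set Hr : ℕ → ℝ → ℝ := fun i z => (if i < a+1 then Real.exp (-s*z) else 1) * (if i = a then (1 - Real.exp (-z))^(-s) else 1) with hHr
  set G : ℕ → ℝ → ℝ := fun i z => Nat.casesOn i ((1 - Real.exp (-z))^s) (fun j => Hr j z) with hG
  have hHm : ∀ i, Measurable (Hr i) := fun i => by
    simp only [hHr]; split_ifs <;> fun_prop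
  have hpos : ∀ x : ℝ, 0 < x → 0 < 1 - Real.exp (-x) := fun x hx => by
    have : Real.exp (-x) < 1 := Real.exp_lt_one_iff.2 (by linarith)
    linarith
  have h := simplex_int_s8 (n+1) G
    (fun i => by
      cases i with
      | zero => simp only [hG]; fun_prop
      | succ j => exact hHm j)
    (fun i x hx => by
      have := hpos x hx
      cases i with
      | zero => exact Real.rpow_nonneg this.le _
      | succ j => simp only [hG, hHr]; split_ifs <;> positivity) (L/2)
  have e0 : pos (G 0) = phi s := rfl
  have e1 : (fun i => pos (G (i+1))) = HH (-s) (psi s) a := by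
    funext i
    simp only [hG, hHr, HH, EE, psi]
    rcases lt_trichotomy i a with h | h | h
    · simp [h, h.ne, show i < a+1 by omega]
    · simp [h]
    · simp [show ¬ i < a by omega, show ¬ i < a+1 by omega, h.ne']
  rw [RR, e0, e1] at h
  obtain ⟨b, rfl⟩ := Nat.exists_eq_add_of_le ha
  rw [conv_HH (-s) (phi s) (psi s) (phi_meas s) (psi_meas s) _ (phi_psi hs0 hs),
    show a + b + 1 = (a+1)+b by ring, RR_GG] at h
  have e2 : Itkl (a+b+2) (2+a) u L = ∫ v in {v : Fin (a+1+b) → ℝ | (∀ i, 0 < v i) ∧ ∑ i, v i < L/2},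
    (∏ i : Fin (a+1+b), G i (v i)) * G (a+1+b) (L/2 - ∑ i, v i) := by
    unfold Itkl
    have hN : a + b + 2 = a + 1 + b + 1 := by ring
    rw [hN]
    congr 1
    ext w
    change _ = (∏ i : Fin (a+1+b), G i (w i)) * G (a+1+b) (L/2 - ∑ i, w i)
    have hx : ∀ i : Fin (a+1+b), w i = wcoord (a+1+b+1) L w (i+1) := fun i => by
      simp [wcoord]
    have hl : L/2 - ∑ i, w i = wcoord (a+1+b+1) L w (a+1+b+1) := by
      simp [wcoord]
    have hx' : ∏ i : Fin (a+1+b), G i (w i) = ∏ i : Fin (a+1+b), G i (wcoord (a+1+b+1) L w (i+1)) :=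
      Finset.prod_congr rfl fun i _ => by rw [← hx i]
    rw [hx', hl, Fin.prod_univ_eq_prod_range (fun i => G i (wcoord (a+1+b+1) L w (i+1))), ← Finset.prod_range_succ (fun i => G i (wcoord (a+1+b+1) L w (i+1))),
      Finset.prod_range_succ']
    simp only [hG, hHr]
    rw [Finset.prod_mul_distrib, Finset.prod_ite_eq', if_pos (by simp; omega), ← Finset.prod_filter]
    have hf : (Finset.range (a+1+b)).filter (fun i => i < a+1) = Finset.range (a+1) := by
      ext i; simp; omega
    rw [hf, ← Real.exp_sum, ← Finset.mul_sum]
    have hsum : ∑ j ∈ Finset.Icc 2 (2+a), wcoord (a+1+b+1) L w j = ∑ i ∈ Finset.range (a+1), wcoord (a+1+b+1) L w (i+1+1) := by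
      rw [← Finset.Ico_add_one_right_eq_Icc, Finset.sum_Ico_eq_sum_range, show 2+a+1-2 = a+1 by omega]
      refine Finset.sum_congr rfl fun i _ => by rw [show 2 + i = i+1+1 by ring]
    rw [hsum, show 2 + a = a+1+1 by ring]
    rfl
  rw [e2, h, show a+b+1-a = b+1 by omega]
  have hC : 0 ≤ π * s / Real.sin (π * s) := by
    rw [← gamma_refl hs0]
    exact mul_nonneg (Real.Gamma_pos_of_pos (by linarith)).le (Real.Gamma_pos_of_pos (by linarith)).le
  rw [Pi.smul_apply, smul_eq_mul, ENNReal.toReal_mul, ENNReal.toReal_ofReal hC]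
  congr 1
  rcases hL.eq_or_lt with h0 | h0
  · rw [← h0]; simp [pos, ff_zero]
  · have : 0 < L/2 := by positivity
    simp only [pos, Set.indicator, Set.mem_Ioi, this, if_true]
    exact ENNReal.toReal_ofReal (ff_nonneg _ _ _ _ this.le)


lemma fact_aux (p : ℕ) : 2^p * p.factorial ≤ (2*p+1).factorial := by
  induction p with
  | zero => simp
  | succ p ih =>
    rw [show 2*(p+1)+1 = (2*p+1)+1+1 by ring, Nat.factorial_succ (2*p+1+1), Nat.factorial_succ (2*p+1), Nat.factorial_succ p, pow_succ]
    calc 2^p*2*((p+1)*p.factorial) = (2*p+2) * 1 * (2^p * p.factorial) := by ring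
      _ ≤ (2*p+2) * (2*p+1+1+1) * (2*p+1).factorial := by gcongr; omega
      _ = _ := by ring

lemma TT_summable (u L r : ℝ) (hu : |u| < 1/2) (hL : 0 ≤ L) (hr : 0 ≤ r) :
    Summable (fun x : ℕ × ℕ => (u^(2*x.1) / (((2*x.1+1).factorial : ℝ) / ((2:ℝ)^x.1 * (x.1.factorial : ℝ)))) *
      (L^(2*(x.1+1+x.2)) * r^x.2 / ((2:ℝ)^(x.1+1+x.2) * ((x.1+1+x.2).factorial : ℝ) * (x.2.factorial : ℝ)))) := by
  have h1 : Summable (fun p : ℕ => (L^2/2) * ((L^2/2)^p / (p.factorial : ℝ))) := (Real.summable_pow_div_factorial _).mul_left _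
  have h2 : Summable (fun j : ℕ => (L^2/2*r)^j / (j.factorial : ℝ)) := Real.summable_pow_div_factorial _
  have h3 := h1.mul_of_nonneg h2 (fun p => by positivity) (fun j => by positivity)
  refine Summable.of_nonneg_of_le (fun x => ?_) (fun x => ?_) h3
  · have : 0 ≤ u^(2*x.1) := by rw [pow_mul]; positivity
    positivity
  · obtain ⟨p, j⟩ := x
    simp only
    have hc0 : 0 ≤ u^(2*p) := by rw [pow_mul]; positivity
    have hc1 : u^(2*p) ≤ 1 := by
      rw [pow_mul]
      refine pow_le_one₀ (sq_nonneg u) ?_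
      rw [← sq_abs]; nlinarith [abs_nonneg u]
    have hd : (2:ℝ)^p * (p.factorial : ℝ) ≤ ((2*p+1).factorial : ℝ) := by
      have h2 := fact_aux p
      exact_mod_cast h2
    have hcoef : u^(2*p) / (((2*p+1).factorial : ℝ) / ((2:ℝ)^p * (p.factorial : ℝ))) ≤ 1 := by
      rw [div_div_eq_mul_div, div_le_one (by positivity)]
      calc _ ≤ 1 * ((2:ℝ)^p * (p.factorial : ℝ)) := by gcongr
        _ ≤ _ := by rw [one_mul]; exact hd
    have hf : (p.factorial : ℝ) * 1 ≤ ((p+1+j).factorial : ℝ) := by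
      rw [mul_one]; exact_mod_cast Nat.factorial_le (by omega)
    calc _ ≤ 1 * (L^(2*(p+1+j)) * r^j / ((2:ℝ)^(p+1+j) * ((p+1+j).factorial : ℝ) * (j.factorial : ℝ))) := by
          gcongr
      _ ≤ 1 * (L^(2*(p+1+j)) * r^j / ((2:ℝ)^(p+1+j) * ((p.factorial : ℝ) * 1) * (j.factorial : ℝ))) := by
          gcongr
      _ = _ := by
          rw [mul_pow, div_pow, div_pow]
          field_simp
          ring

lemma term_hasSum (u L r : ℝ) (hu0 : u ≠ 0) (hL : 0 ≤ L) (n : ℕ) :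
    HasSum (fun p : ℕ => (u^(2*p) / (((2*p+1).factorial : ℝ) / ((2:ℝ)^p * (p.factorial : ℝ)))) *
      (L^(2*(p+1+n)) * r^n / ((2:ℝ)^(p+1+n) * ((p+1+n).factorial : ℝ) * (n.factorial : ℝ))))
      (r^n * (2:ℝ)^(n+1) * ∑ a ∈ Finset.range (n+1), ff (2*u) (a+1) (n+1-a) (L/2) * ff (-(2*u)) (a+1) (n+1-a) (L/2)) := by
  have hs : 2*u ≠ 0 := by simpa using hu0
  rw [ff_key (2*u) hs]
  refine ((sinh_series (2*u) hs (L/2) (by positivity) n).mul_left (r^n * (2:ℝ)^(n+1))).congr_fun ?_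
  intro p
  have e : (2:ℝ)^(2*(p+1+n)) = 2^(p+1+n) * 2^(p+1+n) := by rw [← pow_add]; congr 1; ring
  have e2 : (2:ℝ)^(p+1+n) = 2^p * 2^(n+1) := by rw [← pow_add]; congr 1; ring
  have e3 : (2:ℝ)^(2*p) = 2^p*2^p := by rw [← pow_add]; congr 1; ring
  rw [div_pow, mul_pow, e, e2, e3]
  field_simp

lemma lhs_eq (u L r : ℝ) (hu0 : 0 < |u|) (hu : |u| < 1/2) (hL : 0 ≤ L) (n : ℕ) :
    r^n * (2:ℝ)^(n+1) * ∑ l ∈ Finset.Icc 2 (n+2), Ikl (n+2) l u L * Itkl (n+2) l u L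
    = (2*π*u / Real.sin (2*π*u)) * (r^n * (2:ℝ)^(n+1) *
      ∑ a ∈ Finset.range (n+1), ff (2*u) (a+1) (n+1-a) (L/2) * ff (-(2*u)) (a+1) (n+1-a) (L/2)) := by
  rw [← Finset.Ico_add_one_right_eq_Icc, Finset.sum_Ico_eq_sum_range, show n+2+1-2 = n+1 by omega, mul_left_comm]
  congr 1
  rw [Finset.mul_sum]
  refine Finset.sum_congr rfl fun a ha => ?_
  have ha : a ≤ n := by simpa [Nat.lt_succ_iff] using ha
  rw [Ikl_eq n a ha u L hL, Itkl_eq n a ha u L hu0 hu hL, show π*(2*u) = 2*π*u by ring]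
  ring

/-- **Proposition 5.2 (distance-dependent generating function around a boundary
vertex).** For `0 < |u| < 1/2`, `L ≥ 0`, `r ≥ 0`:
`∑_{k≥2} r^{k−2} 2^{k−1} ∑_{ℓ=2}^k I_{k,ℓ}(u,L) Ĩ_{k,ℓ}(u,L)
  = (2πu/sin(2πu)) ∑_{p≥0} (u^{2p}/(2p+1)!!) ∑_{m≥p+1} L^{2m} r^{m−p−1}/(2^m m! (m−p−1)!)`,
with `(2p+1)!! = (2p+1)!/(2^p p!)`, all series converging absolutely. The outer
`k`-series is indexed by `k = n+2` and the inner `m`-series by `m = p+1+j`. -/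
theorem stmt_8 (u L r : ℝ) (hu0 : 0 < |u|) (hu : |u| < 1/2) (hL : 0 ≤ L) (hr : 0 ≤ r) :
    Summable (fun n : ℕ =>
        |r^n * (2:ℝ)^(n+1)
          * ∑ l ∈ Finset.Icc 2 (n+2), Ikl (n+2) l u L * Itkl (n+2) l u L|) ∧
    (∀ p : ℕ, Summable (fun j : ℕ =>
        |L^(2*(p+1+j)) * r^j
          / ((2:ℝ)^(p+1+j) * ((p+1+j).factorial : ℝ) * (j.factorial : ℝ))|)) ∧
    Summable (fun p : ℕ =>
        |(u^(2*p) / (((2*p+1).factorial : ℝ) / ((2:ℝ)^p * (p.factorial : ℝ))))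
          * ∑' j : ℕ, L^(2*(p+1+j)) * r^j
              / ((2:ℝ)^(p+1+j) * ((p+1+j).factorial : ℝ) * (j.factorial : ℝ))|) ∧
    ∑' n : ℕ, r^n * (2:ℝ)^(n+1)
        * ∑ l ∈ Finset.Icc 2 (n+2), Ikl (n+2) l u L * Itkl (n+2) l u L
      = (2*π*u / Real.sin (2*π*u))
        * ∑' p : ℕ, (u^(2*p) / (((2*p+1).factorial : ℝ) / ((2:ℝ)^p * (p.factorial : ℝ))))
            * ∑' j : ℕ, L^(2*(p+1+j)) * r^j
                / ((2:ℝ)^(p+1+j) * ((p+1+j).factorial : ℝ) * (j.factorial : ℝ)) := by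
  have hu0' : u ≠ 0 := by simpa using hu0
  have hT := TT_summable u L r hu hL hr
  have hT0 : ∀ p j : ℕ, 0 ≤ (u^(2*p) / (((2*p+1).factorial : ℝ) / ((2:ℝ)^p * (p.factorial : ℝ)))) *
      (L^(2*(p+1+j)) * r^j / ((2:ℝ)^(p+1+j) * ((p+1+j).factorial : ℝ) * (j.factorial : ℝ))) := by
    intro p j
    have : 0 ≤ u^(2*p) := by rw [pow_mul]; positivity
    positivity
  have hn := fun n => (term_hasSum u L r hu0' hL n).tsum_eq
  have hP := hT.prod
  have hQ := hT.prod_symm.prod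
  refine ⟨?_, ?_, ?_, ?_⟩
  · simp_rw [lhs_eq u L r hu0 hu hL, ← hn]
    exact (hQ.mul_left _).abs
  · intro p
    have h := hT.prod_factor p
    have hc : u^(2*p) / (((2*p+1).factorial : ℝ) / ((2:ℝ)^p * (p.factorial : ℝ))) ≠ 0 := by positivity
    exact ((summable_mul_left_iff hc).1 h).abs
  · simp_rw [← tsum_mul_left]
    exact hP.abs
  · simp_rw [lhs_eq u L r hu0 hu hL, ← hn, tsum_mul_left (a := 2*π*u / Real.sin (2*π*u))]
    congr 1
    have hc := Summable.tsum_comm (f := fun p j : ℕ => (u^(2*p) / (((2*p+1).factorial : ℝ) / ((2:ℝ)^p * (p.factorial : ℝ)))) *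
      (L^(2*(p+1+j)) * r^j / ((2:ℝ)^(p+1+j) * ((p+1+j).factorial : ℝ) * (j.factorial : ℝ)))) hT
    rw [hc]
    refine tsum_congr fun p => ?_
    exact tsum_mul_left
end

section
/- Let L ≥ 0 and let u be a real number with 0 < |u| < 1/2. Then ∫_{−∞}^∞ e^{2ux} · 2·log((cosh x + cosh(L/2)) / (cosh x − 1)) dx = (2π/u) · (cosh(Lu) − cos(2πu)) / sin(2πu). (The integrand has an integrable logarithmic singularity at x = 0 and decays exponentially at ±∞, so the integral is finite.) -/
open Real

open MeasureTheory Set in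
lemma aux_half (c : ℝ) (hc : |c| < 1) :
    IntegrableOn (fun x : ℝ => exp (c*x) * Real.log (1 - exp (-x))) (Ioi 0) ∧
    HasSum (fun n : ℕ => -(1 / (((n:ℝ)+1) * ((n:ℝ)+1-c))))
      (∫ x in Ioi (0:ℝ), exp (c*x) * Real.log (1 - exp (-x))) := by
  obtain ⟨hc1, hc2⟩ := abs_lt.1 hc
  have hpos : ∀ n : ℕ, 0 < (n:ℝ)+1-c := fun n => by
    have : (0:ℝ) ≤ n := n.cast_nonneg
    linarith
  let F : ℕ → ℝ → ℝ := fun n x => -(1/((n:ℝ)+1)) * exp ((c - (n+1)) * x)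
  have hI : ∀ n, IntegrableOn (F n) (Ioi 0) := fun n =>
    (integrableOn_exp_mul_Ioi (by linarith [hpos n]) 0).const_mul _
  have hv : ∀ n, ∫ x in Ioi (0:ℝ), F n x = -(1 / (((n:ℝ)+1) * ((n:ℝ)+1-c))) := fun n => by
    simp only [F]
    rw [integral_const_mul, integral_exp_mul_Ioi (by linarith [hpos n])]
    have h1 := (hpos n).ne'
    have h2 : c - ((n:ℝ)+1) ≠ 0 := by linarith [hpos n] |> fun h : c - ((n:ℝ)+1) < 0 => h.ne
    have h3 : (n:ℝ)+1 ≠ 0 := by positivity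
    simp only [mul_zero, exp_zero]
    field_simp
    ring
  have hn : ∀ n, ∫ x in Ioi (0:ℝ), ‖F n x‖ = (1 / (((n:ℝ)+1) * ((n:ℝ)+1-c))) := fun n => by
    rw [← neg_neg (1 / (((n:ℝ)+1) * ((n:ℝ)+1-c))), ← hv n, ← integral_neg]
    congr 1
    ext x
    have : 0 < (1/((n:ℝ)+1)) * exp ((c - (n+1)) * x) := by positivity
    simp only [F, neg_mul, norm_neg, neg_neg, Real.norm_eq_abs, abs_of_pos this]
  have hs : Summable (fun n : ℕ => (1 / (((n:ℝ)+1) * ((n:ℝ)+1-c)))) := by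
    have h0 : Summable (fun n : ℕ => (1-|c|)⁻¹ * (1 / ((n:ℝ)+1)^2)) := by
      apply Summable.mul_left
      have := (summable_nat_add_iff 1).2 (Real.summable_one_div_nat_pow.2 (one_lt_two))
      simpa using this
    refine Summable.of_nonneg_of_le (fun n => ?_) (fun n => ?_) h0
    · have := hpos n
      positivity
    · have := hpos n
      rw [← one_div, div_mul_div_comm, one_mul]
      have h4 : 0 < 1 - |c| := by linarith
      apply one_div_le_one_div_of_le (by positivity)
      have h5 : (1-|c|) * ((n:ℝ)+1) ≤ (n:ℝ)+1-c := by
        nlinarith [le_abs_self c, abs_nonneg c, n.cast_nonneg (α := ℝ),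
          mul_nonneg (abs_nonneg c) (n.cast_nonneg (α := ℝ))]
      have h6 : (0:ℝ) < (n:ℝ)+1 := by positivity
      nlinarith
  have hsum := hasSum_integral_of_summable_integral_norm (μ := volume.restrict (Ioi (0:ℝ))) hI
    (by simpa only [hn] using hs)
  have hcongr : ∫ x in Ioi (0:ℝ), ∑' n, F n x
      = ∫ x in Ioi (0:ℝ), exp (c*x) * Real.log (1 - exp (-x)) := by
    apply setIntegral_congr_fun measurableSet_Ioi
    intro x hx
    have hx : 0 < x := hx
    have hh := (hasSum_pow_div_log_of_abs_lt_one (x := exp (-x)) (by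
      rw [abs_of_pos (exp_pos _)]; exact Real.exp_lt_one_iff.2 (by linarith))).mul_left (-exp (c*x))
    have : (fun n => F n x) = fun n : ℕ => -exp (c*x) * (exp (-x) ^ (n+1) / ((n:ℝ)+1)) := by
      ext n
      simp only [F]
      rw [← exp_nat_mul, show (c - ((n:ℝ)+1)) * x = c*x + ((n+1:ℕ):ℝ) * (-x) by push_cast; ring,
        exp_add]
      ring
    show ∑' n, F n x = _
    rw [this, hh.tsum_eq]
    ring
  rw [hcongr] at hsum
  simp only [hv] at hsum
  refine ⟨?_, hsum⟩
  by_contra hcon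
  have h0 := integral_undef hcon
  rw [h0] at hsum
  have h7 := hsum.neg
  simp only [neg_neg, neg_zero] at h7
  have h8 := le_hasSum h7 0 (fun n _ => by have := hpos n; positivity)
  have h9 := hpos 0
  have : 0 < 1 / (((0:ℕ):ℝ)+1) * (1 / (((0:ℕ):ℝ)+1-c)) := by positivity
  rw [div_mul_div_comm, one_mul] at this
  linarith

open MeasureTheory Set in
lemma aux_lin (s : ℝ) (hs : 0 < s) :
    IntegrableOn (fun x : ℝ => exp (-s*x) * x) (Ioi 0) ∧
    ∫ x in Ioi (0:ℝ), exp (-s*x) * x = 1 / s^2 := by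
  have h := Real.integral_rpow_mul_exp_neg_mul_Ioi (a := 2) (r := s) (by norm_num) hs
  have h2 : ∫ x in Ioi (0:ℝ), exp (-s*x) * x = 1 / s^2 := by
    rw [show (1:ℝ) / s^2 = (1/s)^(2:ℝ) * Real.Gamma 2 by
      rw [Real.Gamma_two]; norm_num, ← h]
    congr 1
    ext x
    norm_num
    ring
  refine ⟨?_, h2⟩
  by_contra hcon
  have h0 := integral_undef hcon
  rw [h0] at h2
  have : 0 < 1 / s^2 := by positivity
  linarith

open MeasureTheory Set in
lemma aux_B (s : ℝ) (hs : 0 < s) (hs1 : s < 1) :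
    Integrable (fun x : ℝ => exp (s*x) * Real.log (1 - exp (-x))) ∧
    ∫ x : ℝ, exp (s*x) * Real.log (1 - exp (-x)) = π * Real.cos (π*s) / Real.sin (π*s) / s := by
  obtain ⟨hp, hps⟩ := aux_half s (by rw [abs_of_pos hs]; exact hs1)
  obtain ⟨hm, hms⟩ := aux_half (-s) (by rw [abs_neg, abs_of_pos hs]; exact hs1)
  obtain ⟨hl, hlv⟩ := aux_lin s hs
  have key : ∀ y ∈ Ioi (0:ℝ), exp (-s*y) * y + exp (-s*y) * Real.log (1 - exp (-y))
      = exp (s*(-y)) * Real.log (1 - exp (-(-y))) := by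
    intro y hy
    have hy : 0 < y := hy
    have h1 : 1 - exp (- -y) = -(exp y * (1 - exp (-y))) := by
      rw [mul_sub, ← exp_add]; simp
    have h2 : 0 < 1 - exp (-y) := by
      have : exp (-y) < 1 := Real.exp_lt_one_iff.2 (by linarith)
      linarith
    rw [h1, Real.log_neg_eq_log, Real.log_mul (exp_pos y).ne' h2.ne', Real.log_exp]
    ring_nf
  have hneg : IntegrableOn (fun y : ℝ => exp (s*(-y)) * Real.log (1 - exp (-(-y)))) (Ioi 0) :=
    (hl.add hm).congr_fun key measurableSet_Ioi
  have hnegv : ∫ y in Ioi (0:ℝ), exp (s*(-y)) * Real.log (1 - exp (-(-y)))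
      = 1/s^2 + ∫ x in Ioi (0:ℝ), exp (-s*x) * Real.log (1 - exp (-x)) := by
    rw [← setIntegral_congr_fun measurableSet_Ioi key, integral_add hl hm, hlv]
  have hIic : IntegrableOn (fun x : ℝ => exp (s*x) * Real.log (1 - exp (-x))) (Iic 0) := by
    rw [integrableOn_Iic_iff_integrableOn_Iio]
    have := IntegrableOn.comp_neg_Iio (c := (0:ℝ)) (by simpa only [neg_zero] using hneg)
    simpa only [neg_neg] using this
  have hint : Integrable (fun x : ℝ => exp (s*x) * Real.log (1 - exp (-x))) := by
    rw [← integrableOn_univ, ← Iic_union_Ioi (a := (0:ℝ))]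
    exact hIic.union hp
  refine ⟨hint, ?_⟩
  rw [← intervalIntegral.integral_Iic_add_Ioi hIic hp]
  have h3 := integral_comp_neg_Ioi 0 (fun x : ℝ => exp (s*x) * Real.log (1 - exp (-x)))
  rw [neg_zero] at h3
  rw [← h3, hnegv]
  have hsum := (hms.add hps).tsum_eq
  rw [add_assoc, ← hsum]
  have hz : (s:ℂ) ∈ Complex.integerComplement := by
    rintro ⟨n, hn⟩
    have hn : (n:ℝ) = s := by exact_mod_cast hn
    rw [← hn] at hs hs1
    have h4 : 0 < n := by exact_mod_cast hs
    have h5 : n < 1 := by exact_mod_cast hs1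
    omega
  have hcot := cot_series_rep' hz
  have hcot' : π * Real.cot (π * s) - 1 / s
      = ∑' n : ℕ, (1 / (s - ((n:ℝ)+1)) + 1 / (s + ((n:ℝ)+1))) := by
    exact_mod_cast hcot
  have h6 : (fun n : ℕ => -(1 / (((n:ℝ)+1) * ((n:ℝ)+1- -s))) + -(1 / (((n:ℝ)+1) * ((n:ℝ)+1-s))))
      = fun n : ℕ => s⁻¹ * (1 / (s - ((n:ℝ)+1)) + 1 / (s + ((n:ℝ)+1))) := by
    ext n
    have hn : (0:ℝ) ≤ n := n.cast_nonneg
    have a1 : (n:ℝ)+1 ≠ 0 := by positivity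
    have a2 : (n:ℝ)+1-s ≠ 0 := by apply ne_of_gt; linarith
    have a3 : s-((n:ℝ)+1) ≠ 0 := by apply ne_of_lt; linarith
    have a4 : s+((n:ℝ)+1) ≠ 0 := by positivity
    rw [sub_neg_eq_add, show s-((n:ℝ)+1) = -((n:ℝ)+1-s) by ring]
    have a5 : (n:ℝ)+1+s ≠ 0 := by positivity
    field_simp
    ring
  rw [h6, tsum_mul_left, ← hcot', Real.cot_eq_cos_div_sin]
  field_simp
  ring

open MeasureTheory Set in
lemma aux_A (s : ℝ) (hs : 0 < s) (hs1 : s < 1) :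
    Integrable (fun x : ℝ => exp (s*x) * Real.log (1 + exp (-x))) ∧
    ∫ x : ℝ, exp (s*x) * Real.log (1 + exp (-x)) = π / Real.sin (π*s) / s := by
  obtain ⟨h1, h1v⟩ := aux_B s hs hs1
  obtain ⟨h2, h2v⟩ := aux_B (s/2) (by linarith) (by linarith)
  have h3 := h2.comp_mul_left' (two_ne_zero)
  have h3v := Measure.integral_comp_mul_left
    (fun x : ℝ => exp (s/2*x) * Real.log (1 - exp (-x))) 2
  have key : (fun x : ℝ => exp (s/2*(2*x)) * Real.log (1 - exp (-(2*x)))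
      - exp (s*x) * Real.log (1 - exp (-x))) =ᵐ[volume]
      fun x : ℝ => exp (s*x) * Real.log (1 + exp (-x)) := by
    have : ∀ᵐ x : ℝ, x ≠ 0 := by simp [ae_iff]
    filter_upwards [this] with x hx
    have e1 : 1 - exp (-x) ≠ 0 := by
      intro h
      have : exp (-x) = 1 := by linarith
      rw [exp_eq_one_iff] at this
      exact hx (by linarith)
    have e2 : 1 - exp (-(2*x)) = (1 - exp (-x)) * (1 + exp (-x)) := by
      rw [show -(2*x) = -x + -x by ring, exp_add]; ring
    rw [e2, Real.log_mul e1 (by positivity), show s/2*(2*x) = s*x by ring]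
    ring
  refine ⟨(h3.sub h1).congr key, ?_⟩
  rw [← integral_congr_ae key, integral_sub h3 h1, h3v, h2v, h1v]
  have hp := Real.pi_pos
  have s1 : 0 < Real.sin (π*(s/2)) := Real.sin_pos_of_pos_of_lt_pi (by positivity) (by nlinarith)
  have s2 : 0 < Real.cos (π*(s/2)) := Real.cos_pos_of_mem_Ioo ⟨by nlinarith, by nlinarith⟩
  have d1 : Real.sin (π*s) = 2 * Real.sin (π*(s/2)) * Real.cos (π*(s/2)) := by
    rw [← Real.sin_two_mul]; ring_nf
  have d2 : Real.cos (π*s) = 2 * Real.cos (π*(s/2))^2 - 1 := by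
    rw [← Real.cos_two_mul]; ring_nf
  rw [d1, d2, abs_of_pos (by norm_num), smul_eq_mul]
  field_simp
  ring

open MeasureTheory Set in
lemma aux_shift (s a : ℝ) (hs : 0 < s) (hs1 : s < 1) :
    Integrable (fun x : ℝ => exp (s*x) * Real.log (1 + exp (-(x+a)))) ∧
    ∫ x : ℝ, exp (s*x) * Real.log (1 + exp (-(x+a))) = exp (-(s*a)) * (π / Real.sin (π*s) / s) := by
  obtain ⟨h, hv⟩ := aux_A s hs hs1
  have e : (fun x : ℝ => exp (s*x) * Real.log (1 + exp (-(x+a))))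
      = fun x : ℝ => exp (-(s*a)) * (exp (s*(x+a)) * Real.log (1 + exp (-(x+a)))) := by
    ext x
    rw [← mul_assoc, ← exp_add]
    ring_nf
  rw [e]
  refine ⟨(h.comp_add_right a).const_mul _, ?_⟩
  rw [integral_const_mul,
    integral_add_right_eq_self (fun x : ℝ => exp (s*x) * Real.log (1 + exp (-x))), hv]

open MeasureTheory Set in
lemma aux_pos (L u : ℝ) (hu0 : 0 < u) (hu : u < 1/2) :
    ∫ x : ℝ, Real.exp (2*u*x)
        * (2 * Real.log ((Real.cosh x + Real.cosh (L/2)) / (Real.cosh x - 1)))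
      = (2*π/u) * (Real.cosh (L*u) - Real.cos (2*π*u)) / Real.sin (2*π*u) := by
  obtain ⟨h1, h1v⟩ := aux_shift (2*u) (L/2) (by linarith) (by linarith)
  obtain ⟨h2, h2v⟩ := aux_shift (2*u) (-(L/2)) (by linarith) (by linarith)
  obtain ⟨h3, h3v⟩ := aux_B (2*u) (by linarith) (by linarith)
  have key : (fun x : ℝ => Real.exp (2*u*x)
        * (2 * Real.log ((Real.cosh x + Real.cosh (L/2)) / (Real.cosh x - 1)))) =ᵐ[volume]
      fun x : ℝ => 2 * ((exp (2*u*x) * Real.log (1 + exp (-(x+L/2)))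
        + exp (2*u*x) * Real.log (1 + exp (-(x+ -(L/2)))))
        - 2 * (exp (2*u*x) * Real.log (1 - exp (-x)))) := by
    have : ∀ᵐ x : ℝ, x ≠ 0 := by simp [ae_iff]
    filter_upwards [this] with x hx
    have e1 : 1 - exp (-x) ≠ 0 := by
      intro h
      have : exp (-x) = 1 := by linarith
      rw [exp_eq_one_iff] at this
      exact hx (by linarith)
    have e2 : Real.cosh x + Real.cosh (L/2)
        = exp x / 2 * ((1 + exp (-(x+L/2))) * (1 + exp (-(x+ -(L/2))))) := by
      rw [Real.cosh_eq, Real.cosh_eq, show -(x+L/2) = -x + -(L/2) by ring,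
        show -(x+ -(L/2)) = -x + L/2 by ring]
      simp only [exp_add, exp_neg]
      field_simp
      ring
    have e3 : Real.cosh x - 1 = exp x / 2 * (1 - exp (-x))^2 := by
      rw [Real.cosh_eq, exp_neg]
      field_simp
      ring
    rw [e2, e3, mul_div_mul_left _ _ (by positivity), Real.log_div (by positivity) (by positivity),
      Real.log_mul (by positivity) (by positivity), Real.log_pow]
    push_cast
    ring
  rw [integral_congr_ae key, integral_const_mul, integral_sub (by exact h1.add h2) (h3.const_mul 2),
    integral_add h1 h2, integral_const_mul, h1v, h2v, h3v, Real.cosh_eq,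
    show π*(2*u) = 2*π*u by ring, show -(2*u*(L/2)) = -(L*u) by ring,
    show -(2*u*(-(L/2))) = L*u by ring]
  have hp := Real.pi_pos
  have s1 : 0 < Real.sin (2*π*u) := Real.sin_pos_of_pos_of_lt_pi (by positivity) (by nlinarith)
  field_simp
  ring

/-- **Two-sided Laplace transform of the distance-difference density `X₁(x;L)`.**
For `L ≥ 0` and `0 < |u| < 1/2`,
`∫_{−∞}^∞ e^{2ux} · 2 log((cosh x + cosh(L/2))/(cosh x − 1)) dx
  = (2π/u)(cosh(Lu) − cos(2πu))/sin(2πu)`. -/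
theorem stmt_9 (L u : ℝ) (hL : 0 ≤ L) (hu0 : 0 < |u|) (hu : |u| < 1/2) :
    ∫ x : ℝ, Real.exp (2*u*x)
        * (2 * Real.log ((Real.cosh x + Real.cosh (L/2)) / (Real.cosh x - 1)))
      = (2*π/u) * (Real.cosh (L*u) - Real.cos (2*π*u)) / Real.sin (2*π*u) := by
  rcases lt_or_gt_of_ne (abs_pos.1 hu0) with h | h
  · have h1 := aux_pos L (-u) (by linarith) (by rwa [abs_of_neg h] at hu)
    rw [← MeasureTheory.integral_neg_eq_self]
    simp only [Real.cosh_neg]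
    have e : ∀ x : ℝ, 2*u*(-x) = 2*(-u)*x := fun x => by ring
    simp only [e]
    rw [h1, mul_neg, Real.cosh_neg, mul_neg, Real.cos_neg, Real.sin_neg, div_neg, div_neg, neg_mul,
      neg_div, neg_neg]
  · exact aux_pos L u h (by rwa [abs_of_pos h] at hu)
end

section
/- Let L ≥ 0. Then ∫_{−∞}^∞ 2·log((cosh x + cosh(L/2)) / (cosh x − 1)) dx = 2π² + L²/2. -/
open Real
open MeasureTheory Set

lemma Z_int : ∫ x in Ioi (0:ℝ), -Real.log (1 - exp (-x)) = π^2/6 := by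
  have hi : ∀ n : ℕ, ∫ x in Ioi (0:ℝ), exp (-((n:ℝ)+1) * x) / ((n:ℝ)+1) = 1/((n:ℝ)+1)^2 := by
    intro n
    have hn : (0:ℝ) < (n:ℝ)+1 := by positivity
    rw [integral_div, integral_exp_mul_Ioi (by linarith)]
    rw [mul_zero, exp_zero, neg_div, div_neg, neg_neg, div_div, sq]
  have hs : HasSum (fun n : ℕ => 1/((n:ℝ)+1)^2) (π^2/6) := by
    have := (hasSum_nat_add_iff' 1).2 hasSum_zeta_two
    simpa using this
  have h := hasSum_integral_of_summable_integral_norm (μ := volume.restrict (Ioi (0:ℝ)))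
    (F := fun (n : ℕ) (x : ℝ) => exp (-((n:ℝ)+1) * x) / ((n:ℝ)+1)) ?_ ?_
  · simp only [hi] at h
    rw [← h.unique hs]
    refine setIntegral_congr_fun measurableSet_Ioi fun x hx => ?_
    have hx' : (0:ℝ) < x := hx
    have := hasSum_pow_div_log_of_abs_lt_one (x := exp (-x)) (by
      rw [abs_of_pos (exp_pos _)]; simpa using hx')
    rw [← this.tsum_eq]
    refine tsum_congr fun n => ?_
    rw [← Real.exp_nat_mul]; push_cast; ring_nf
  · intro n
    have hn : (0:ℝ) < (n:ℝ)+1 := by positivity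
    exact (integrableOn_exp_mul_Ioi (by linarith) 0).div_const _
  · refine hs.summable.congr fun n => ?_
    rw [← hi n]
    refine integral_congr_ae (Filter.Eventually.of_forall fun x => ?_)
    have hn : (0:ℝ) < (n:ℝ)+1 := by positivity
    simp only []
    rw [Real.norm_of_nonneg (by positivity)]

lemma Z_integrable : IntegrableOn (fun x : ℝ => -Real.log (1 - exp (-x))) (Ioi 0) := by
  by_contra h
  have := Z_int
  rw [integral_undef h] at this
  have : 0 < π^2/6 := by positivity
  linarith

lemma g_eq {x : ℝ} (hx : x ∈ Ioi (0:ℝ)) : Real.log (1 + exp (-x)) =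
    -Real.log (1 - exp (-x)) - (-Real.log (1 - exp (-(2*x)))) := by
  have hx' : (0:ℝ) < x := hx
  have h1 : exp (-x) < 1 := by simpa using hx'
  have : 1 - exp (-(2*x)) = (1 - exp (-x)) * (1 + exp (-x)) := by
    rw [show -(2*x) = -x + -x by ring, exp_add]; ring
  rw [this, Real.log_mul (by linarith) (by positivity)]; ring

lemma Z2_integrable : IntegrableOn (fun x : ℝ => -Real.log (1 - exp (-(2*x)))) (Ioi 0) := by
  have := (integrableOn_Ioi_comp_mul_left_iff (fun x : ℝ => -Real.log (1 - exp (-x))) 0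
    (a := 2) (by norm_num)).2 (by simpa using Z_integrable)
  exact this

lemma g_integrable : IntegrableOn (fun x : ℝ => Real.log (1 + exp (-x))) (Ioi 0) :=
  (Z_integrable.sub Z2_integrable).congr_fun (fun _ hx => (g_eq hx).symm) measurableSet_Ioi

lemma g_int : ∫ x in Ioi (0:ℝ), Real.log (1 + exp (-x)) = π^2/12 := by
  rw [setIntegral_congr_fun measurableSet_Ioi (fun _ hx => g_eq hx),
    integral_sub Z_integrable Z2_integrable,
    integral_comp_mul_left_Ioi (fun x : ℝ => -Real.log (1 - exp (-x))) 0 (by norm_num)]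
  rw [mul_zero, Z_int, smul_eq_mul]; ring

lemma g_cont : Continuous (fun x : ℝ => Real.log (1 + exp (-x))) :=
  Continuous.log (by fun_prop) fun x => by positivity

lemma g_shift (c : ℝ) : IntegrableOn (fun x : ℝ => Real.log (1 + exp (-(x+c)))) (Ioi 0) ∧
    ∫ x in Ioi (0:ℝ), Real.log (1 + exp (-(x+c))) = 
      π^2/12 - ∫ x in (0:ℝ)..c, Real.log (1 + exp (-x)) := by
  have hpre : (fun x : ℝ => x + c) ⁻¹' (Ioi c) = Ioi 0 := by ext; simp
  have hI : IntegrableOn (fun x : ℝ => Real.log (1 + exp (-x))) (Ioi c) := by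
    rcases le_total 0 c with h | h
    · exact g_integrable.mono_set (Ioi_subset_Ioi h)
    · rw [← Ioc_union_Ioi_eq_Ioi h]
      exact (g_cont.integrableOn_Ioc).union g_integrable
  have hmp := measurePreserving_add_right (volume : Measure ℝ) c
  have hem := measurableEmbedding_addRight (G := ℝ) c
  constructor
  · rw [← hpre]
    exact (hmp.integrableOn_comp_preimage hem).2 hI
  · rw [← hpre, hmp.setIntegral_preimage_emb hem (fun x : ℝ => Real.log (1 + exp (-x)))]
    have := intervalIntegral.integral_interval_add_Ioi g_integrable hI
    rw [g_int] at this
    linarith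

lemma g_refl (a : ℝ) : ∫ x in (0:ℝ)..(-a), Real.log (1 + exp (-x)) =
    - (a^2/2) - ∫ x in (0:ℝ)..a, Real.log (1 + exp (-x)) := by
  have h := intervalIntegral.integral_comp_neg (a := 0) (b := a)
    (fun x : ℝ => Real.log (1 + exp (-x)))
  rw [neg_zero] at h
  rw [intervalIntegral.integral_symm, ← h]
  have : ∀ x : ℝ, Real.log (1 + exp (- -x)) = x + Real.log (1 + exp (-x)) := by
    intro x
    have : 1 + exp (- -x) = exp x * (1 + exp (-x)) := by
      rw [mul_add, ← exp_add]; simp [add_comm]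
    rw [this, Real.log_mul (exp_pos _).ne' (by positivity), Real.log_exp]
  simp only [this]
  rw [intervalIntegral.integral_add intervalIntegral.intervalIntegrable_id
    (g_cont.intervalIntegrable _ _), integral_id]
  ring

/-- **Total mass of the distance-difference density `X₁(x;L)`.** For `L ≥ 0`,
`∫_{−∞}^∞ 2 log((cosh x + cosh(L/2))/(cosh x − 1)) dx = 2π² + L²/2`,
which is the Weil–Petersson volume `V_{0,4}(0,0,0,L)`. -/
theorem stmt_10 (L : ℝ) (hL : 0 ≤ L) :
    ∫ x : ℝ, 2 * Real.log ((Real.cosh x + Real.cosh (L/2)) / (Real.cosh x - 1))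
      = 2*π^2 + L^2/2 := by
  have habs := integral_comp_abs
    (f := fun x : ℝ => 2 * Real.log ((Real.cosh x + Real.cosh (L/2)) / (Real.cosh x - 1)))
  simp only [Real.cosh_abs] at habs
  rw [habs]
  have key : ∀ x ∈ Ioi (0:ℝ),
      2 * Real.log ((Real.cosh x + Real.cosh (L/2)) / (Real.cosh x - 1)) =
      2 * ((Real.log (1 + exp (-(x+L/2))) + Real.log (1 + exp (-(x+ -(L/2)))))
        + 2 * (-Real.log (1 - exp (-x)))) := by
    intro x hx
    have hx' : (0:ℝ) < x := hx
    have h1 : exp (-x) < 1 := by simpa using hx'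
    have h2 : 0 < 1 - exp (-x) := by linarith
    have hx1 : exp x * exp (-x) = 1 := by rw [← exp_add]; simp
    have ha1 : exp (L/2) * exp (-(L/2)) = 1 := by rw [← exp_add]; simp
    have e : (Real.cosh x + Real.cosh (L/2)) / (Real.cosh x - 1) =
        (1 + exp (-(x+L/2))) * (1 + exp (-(x+ -(L/2)))) / (1 - exp (-x))^2 := by
      have n : Real.cosh x + Real.cosh (L/2) =
         exp x / 2 * ((1 + exp (-(x+L/2))) * (1 + exp (-(x+ -(L/2))))) := by
        rw [Real.cosh_eq, Real.cosh_eq, neg_add, neg_add, neg_neg, exp_add, exp_add]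
        linear_combination (-(exp (-x) * exp (L/2) * exp (-(L/2)) + exp (L/2) + exp (-(L/2)))/2) * hx1
          - exp (-x) / 2 * ha1
      have d : Real.cosh x - 1 = exp x / 2 * (1 - exp (-x))^2 := by
        rw [Real.cosh_eq]
        linear_combination (1 - exp (-x)/2) * hx1
      rw [n, d, mul_div_mul_left _ _ (by positivity)]
    rw [e, Real.log_div (by positivity) (by positivity), Real.log_mul (by positivity) (by positivity),
      Real.log_pow]
    push_cast; ring
  have hadd : IntegrableOn (fun x : ℝ =>
      Real.log (1 + exp (-(x+L/2))) + Real.log (1 + exp (-(x+ -(L/2))))) (Ioi 0) :=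
    (g_shift _).1.add (g_shift _).1
  rw [setIntegral_congr_fun measurableSet_Ioi key, integral_const_mul,
    integral_add hadd (Z_integrable.const_mul 2),
    integral_add (g_shift _).1 (g_shift _).1, integral_const_mul, Z_int, (g_shift _).2,
    (g_shift _).2, g_refl]
  ring
end
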